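/- arXiv:1101.3445 — 3 statements merged into one kernel-verified Lean document; each statement's English description precedes it below -/
import Mathlib

section
/- Let Λ be a compact invariant set with the weak specification property for a flow X_t, and let O = O(p) and O' = O(q) be two distinct hyperbolic periodic orbits in Λ. Then W^u(O) ∩ W^s(O') ≠ ∅. -/
open Filter Set Metric TensorProduct

section Defs
variable {M : Type*}

/-- A continuous flow on a topological space. -/
def IsFlow [TopologicalSpace M] (φ : ℝ → M → M) : Prop :=
  Continuous (fun p : ℝ × M => φ p.1 p.2) ∧ (∀ x, φ 0 x = x) ∧
    ∀ s t x, φ (s + t) x = φ s (φ t x)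

def InvariantSet (φ : ℝ → M → M) (Λ : Set M) : Prop :=
  ∀ t : ℝ, ∀ x ∈ Λ, φ t x ∈ Λ

def orbitOf (φ : ℝ → M → M) (p : M) : Set M := Set.range fun t : ℝ => φ t p

/-- A critical point: singularity or periodic point. -/
def IsCriticalPt (φ : ℝ → M → M) (p : M) : Prop := ∃ T : ℝ, 0 < T ∧ φ T p = p

/-- `K` is a spacing constant for `ε`: any `K`-spaced weak specification
(two orbit segments of points of `Λ`, parametrized over `[a₁,b₁]` and `[a₂,b₂]`
with `a₂ ≥ b₁ + K`) is `ε`-shadowed by a point of `Λ`. -/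
def SpecConst [MetricSpace M] (φ : ℝ → M → M) (Λ : Set M) (ε K : ℝ) : Prop :=
  ∀ a₁ b₁ a₂ b₂ : ℝ, a₁ ≤ b₁ → a₂ ≤ b₂ → b₁ + K ≤ a₂ →
    ∀ x ∈ Λ, ∀ y ∈ Λ, ∃ z ∈ Λ,
      (∀ t ∈ Set.Icc a₁ b₁, dist (φ t z) (φ (t - a₁) x) < ε) ∧
      (∀ t ∈ Set.Icc a₂ b₂, dist (φ t z) (φ (t - a₂) y) < ε)

/-- The weak specification property on `Λ`. -/
def WeakSpec [MetricSpace M] (φ : ℝ → M → M) (Λ : Set M) : Prop :=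
  ∀ ε : ℝ, 0 < ε → ∃ K : ℝ, 0 < K ∧ SpecConst φ Λ ε K

/-- Topological mixing of the flow restricted to `Λ`. -/
def TopMixingOn [TopologicalSpace M] (φ : ℝ → M → M) (Λ : Set M) : Prop :=
  ∀ U V : Set M, IsOpen U → IsOpen V → (U ∩ Λ).Nonempty → (V ∩ Λ).Nonempty →
    ∃ N : ℝ, 0 < N ∧ ∀ t : ℝ, N ≤ t → (φ t '' (V ∩ Λ) ∩ (U ∩ Λ)).Nonempty

/-- Topological transitivity of the flow restricted to `Λ`. -/
def TopTransOn [TopologicalSpace M] (φ : ℝ → M → M) (Λ : Set M) : Prop :=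
  ∀ U V : Set M, IsOpen U → IsOpen V → (U ∩ Λ).Nonempty → (V ∩ Λ).Nonempty →
    ∃ t : ℝ, 0 < t ∧ (φ t '' (V ∩ Λ) ∩ (U ∩ Λ)).Nonempty

/-- The stable set `W^s(σ)` of a point (e.g. a singularity). -/
def WsPoint [TopologicalSpace M] (φ : ℝ → M → M) (σ : M) : Set M :=
  {y | Filter.Tendsto (fun t : ℝ => φ t y) Filter.atTop (nhds σ)}

/-- The unstable set `W^u(σ)` of a point (e.g. a singularity). -/
def WuPoint [TopologicalSpace M] (φ : ℝ → M → M) (σ : M) : Set M :=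
  {y | Filter.Tendsto (fun t : ℝ => φ t y) Filter.atBot (nhds σ)}

/-- The strong stable set `W^{ss}(p)`. -/
def Wss [MetricSpace M] (φ : ℝ → M → M) (p : M) : Set M :=
  {y | Filter.Tendsto (fun t : ℝ => dist (φ t y) (φ t p)) Filter.atTop (nhds 0)}

/-- The strong unstable set `W^{uu}(p)`. -/
def Wuu [MetricSpace M] (φ : ℝ → M → M) (p : M) : Set M :=
  {y | Filter.Tendsto (fun t : ℝ => dist (φ t y) (φ t p)) Filter.atBot (nhds 0)}

/-- The stable set of the orbit of `p`: `W^s(O(p)) = ⋃_t W^{ss}(X_t(p))`. -/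
def WsOrb [MetricSpace M] (φ : ℝ → M → M) (p : M) : Set M := ⋃ s : ℝ, Wss φ (φ s p)

/-- The unstable set of the orbit of `p`. -/
def WuOrb [MetricSpace M] (φ : ℝ → M → M) (p : M) : Set M := ⋃ s : ℝ, Wuu φ (φ s p)

end Defs

section VF
variable {E : Type*} [NormedAddCommGroup E] [NormedSpace ℝ E]

/-- `φ` is the flow generated by the vector field `X`. -/
def GeneratedBy (X : E → E) (φ : ℝ → E → E) : Prop :=
  (∀ x, φ 0 x = x) ∧ (∀ s t x, φ (s + t) x = φ s (φ t x)) ∧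
    ∀ x t, HasDerivAt (fun s => φ s x) (X (φ t x)) t

/-- The complexification of a continuous real-linear endomorphism. -/
noncomputable def cxEnd (A : E →L[ℝ] E) : Module.End ℂ (ℂ ⊗[ℝ] E) :=
  (A : E →ₗ[ℝ] E).baseChange ℂ

/-- A hyperbolic singularity: `X σ = 0` and no eigenvalue of `DX(σ)` has zero real part. -/
def HypSing (X : E → E) (σ : E) : Prop :=
  X σ = 0 ∧ ∀ μ ∈ spectrum ℂ (cxEnd (fderiv ℝ X σ)), μ.re ≠ 0

/-- A hyperbolic periodic point: a regular point of period `T > 0` such that no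
characteristic multiplier (eigenvalue of `Dφ_T(p)` other than the simple eigenvalue `1`
coming from the flow direction) lies on the unit circle. -/
def HypPeriodic (X : E → E) (φ : ℝ → E → E) (p : E) : Prop :=
  X p ≠ 0 ∧ ∃ T : ℝ, 0 < T ∧ φ T p = p ∧
    (∀ μ ∈ spectrum ℂ (cxEnd (fderiv ℝ (φ T) p)), μ = 1 ∨ ‖μ‖ ≠ 1) ∧
    Module.finrank ℂ (Module.End.maxGenEigenspace (cxEnd (fderiv ℝ (φ T) p)) 1) = 1

/-- A hyperbolic critical element: hyperbolic singularity or hyperbolic periodic point. -/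
def HypCritical (X : E → E) (φ : ℝ → E → E) (p : E) : Prop :=
  HypSing X p ∨ HypPeriodic X φ p

/-- A hyperbolic periodic orbit of saddle type: it has characteristic multipliers both
inside and outside the unit circle. -/
def IsSaddlePeriodic (X : E → E) (φ : ℝ → E → E) (p : E) : Prop :=
  X p ≠ 0 ∧ ∃ T : ℝ, 0 < T ∧ φ T p = p ∧
    (∃ μ ∈ spectrum ℂ (cxEnd (fderiv ℝ (φ T) p)), ‖μ‖ < 1) ∧
    (∃ μ ∈ spectrum ℂ (cxEnd (fderiv ℝ (φ T) p)), 1 < ‖μ‖)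

/-- `Crit(X)`: singularities together with periodic points. -/
def CritSet (X : E → E) (φ : ℝ → E → E) : Set E :=
  {x | X x = 0 ∨ ∃ T : ℝ, 0 < T ∧ φ T x = x}

/-- `PO(X)`: the (regular) periodic points. -/
def PerPts (X : E → E) (φ : ℝ → E → E) : Set E :=
  {x | X x ≠ 0 ∧ ∃ T : ℝ, 0 < T ∧ φ T x = x}

end VF

section Analysis
variable {E : Type*} [NormedAddCommGroup E] [NormedSpace ℝ E]

/-- Continuity of the flow, uniform on compact time intervals. -/
lemma flow_close (φ : ℝ → E → E) (hflow : IsFlow φ) (q : E) (T : ℝ) {ρ : ℝ} (hρ : 0 < ρ) :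
    ∀ᶠ x in nhds q, ∀ t ∈ Set.Icc 0 T, dist (φ t x) (φ t q) < ρ := by
  apply isCompact_Icc.eventually_forall_of_forall_eventually
  intro t _
  have h1 : Continuous fun z : E × ℝ => dist (φ z.2 z.1) (φ z.2 q) := by
    have := hflow.1
    exact (this.comp (continuous_snd.prodMk continuous_fst)).dist
      (this.comp (continuous_snd.prodMk continuous_const))
  have h2 := h1.tendsto (q, t)
  simp only [dist_self] at h2
  exact h2.eventually_lt_const hρ

lemma unif_lin [FiniteDimensional ℝ E] (X : E → E) (hX : ContDiff ℝ 1 X) (S : Set E) (hS : IsCompact S)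
    {η : ℝ} (hη : 0 < η) :
    ∃ ρ > 0, ∀ z ∈ S, ∀ x y, dist x z < ρ → dist y z < ρ →
      ‖X x - X y - fderiv ℝ X z (x - y)‖ ≤ η * ‖x - y‖ := by
  have : ProperSpace E := FiniteDimensional.proper ℝ E
  have hc : Continuous (fderiv ℝ X) := hX.continuous_fderiv (by norm_num)
  have hu := (hS.cthickening (r := 1)).uniformContinuousOn_of_continuous hc.continuousOn
  rw [Metric.uniformContinuousOn_iff] at hu
  obtain ⟨ρ, hρ, h⟩ := hu η hη
  refine ⟨min ρ 1, by positivity, fun z hz x y hx hy => ?_⟩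
  refine Convex.norm_image_sub_le_of_norm_fderiv_le' (s := Metric.ball z (min ρ 1))
    (fun w _ => (hX.differentiable (by norm_num)) w) (fun w hw => ?_) (convex_ball _ _) hy hx
  rw [← dist_eq_norm]
  rw [Metric.mem_ball, lt_min_iff] at hw
  refine (h w ?_ z ?_ hw.1).le
  · exact Metric.mem_cthickening_of_dist_le w z 1 S hz hw.2.le
  · exact Metric.self_subset_cthickening _ hz

lemma gron_le {δ K ε x T : ℝ} (hδ : 0 ≤ δ) (hK : 0 < K) (hε : 0 ≤ ε) (hxT : x ≤ T) :
    gronwallBound δ K ε x ≤ δ * Real.exp (K * T) + ε * (Real.exp (K * T) / K) := by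
  rw [gronwallBound_of_K_ne_0 hK.ne']
  have h1 : Real.exp (K * x) ≤ Real.exp (K * T) := Real.exp_le_exp.2 (by gcongr)
  have h2 : ε / K * (Real.exp (K * x) - 1) ≤ ε / K * Real.exp (K * T) := by
    gcongr; linarith
  have h3 : ε / K * Real.exp (K * T) = ε * (Real.exp (K * T) / K) := by ring
  have : δ * Real.exp (K * x) ≤ δ * Real.exp (K * T) := by gcongr
  linarith

lemma deriv_bound [FiniteDimensional ℝ E] (X : E → E) (φ : ℝ → E → E) (hX : ContDiff ℝ 1 X)
    (hflow : IsFlow φ) (q : E) (T : ℝ) :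
    ∃ M > 0, ∀ t ∈ Set.Icc 0 T, ‖fderiv ℝ X (φ t q)‖ ≤ M := by
  have hc : Continuous (fderiv ℝ X) := hX.continuous_fderiv (by norm_num)
  have h1 : Continuous fun t => φ t q := hflow.1.comp (continuous_id.prodMk continuous_const)
  obtain ⟨C, hC⟩ := (isCompact_Icc (a := 0) (b := T)).exists_bound_of_continuousOn
    (hc.comp h1).continuousOn
  exact ⟨max C 1, by positivity, fun t ht => (hC t ht).trans (le_max_left _ _)⟩

lemma flow_lip [FiniteDimensional ℝ E] (X : E → E) (φ : ℝ → E → E) (hX : ContDiff ℝ 1 X)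
    (hflow : IsFlow φ) (hgen : GeneratedBy X φ) (q : E) (T : ℝ) :
    ∃ C > 0, ∀ᶠ z in nhds (q, q), ∀ t ∈ Set.Icc 0 T,
      ‖φ t z.1 - φ t z.2‖ ≤ C * ‖z.1 - z.2‖ := by
  obtain ⟨M, hM, hMb⟩ := deriv_bound X φ hX hflow q T
  have h1 : Continuous fun t => φ t q := hflow.1.comp (continuous_id.prodMk continuous_const)
  obtain ⟨ρ, hρ, hl⟩ := unif_lin X hX _ ((isCompact_Icc (a := 0) (b := T)).image h1) one_pos
  refine ⟨Real.exp ((M + 1) * T), Real.exp_pos _, ?_⟩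
  have hcl := flow_close φ hflow q T hρ
  rw [nhds_prod_eq]
  filter_upwards [hcl.prod_mk hcl] with z hz t ht
  have hd : ∀ t, HasDerivAt (fun t => φ t z.1 - φ t z.2) (X (φ t z.1) - X (φ t z.2)) t :=
    fun t => (hgen.2.2 z.1 t).sub (hgen.2.2 z.2 t)
  have := norm_le_gronwallBound_of_norm_deriv_right_le (a := 0) (b := T)
    (f := fun t => φ t z.1 - φ t z.2) (f' := fun t => X (φ t z.1) - X (φ t z.2))
    (δ := ‖z.1 - z.2‖) (K := M + 1) (ε := 0)
    (fun t _ => (hd t).continuousAt.continuousWithinAt)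
    (fun t _ => (hd t).hasDerivWithinAt) (by simp [hgen.1]) ?_ t ht
  · refine this.trans ((gron_le (norm_nonneg _) (by positivity) le_rfl (T := T) ?_).trans_eq ?_)
    · simpa using ht.2
    · ring
  · intro s hs
    have hs' : s ∈ Set.Icc 0 T := ⟨hs.1, hs.2.le⟩
    have h2 := hl (φ s q) ⟨s, hs', rfl⟩ _ _ (hz.1 s hs') (hz.2 s hs')
    have h3 := (fderiv ℝ X (φ s q)).le_of_opNorm_le (hMb s hs') (φ s z.1 - φ s z.2)
    have h4 := norm_le_norm_add_norm_sub' (X (φ s z.1) - X (φ s z.2))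
      (fderiv ℝ X (φ s q) (φ s z.1 - φ s z.2))
    linarith

/-- Differentiability of the time-`T` map at `q` upgrades to strict differentiability. -/
lemma flow_strict [FiniteDimensional ℝ E] (X : E → E) (φ : ℝ → E → E) (hX : ContDiff ℝ 1 X)
    (hflow : IsFlow φ) (hgen : GeneratedBy X φ) (q : E) {T : ℝ} (hT : 0 < T)
    (A : E →L[ℝ] E) (hA : HasFDerivAt (φ T) A q) : HasStrictFDerivAt (φ T) A q := by
  obtain ⟨M, hM, hMb⟩ := deriv_bound X φ hX hflow q T
  obtain ⟨C, hC, hlip⟩ := flow_lip X φ hX hflow hgen q T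
  have h1 : Continuous fun t => φ t q := hflow.1.comp (continuous_id.prodMk continuous_const)
  rw [hasStrictFDerivAt_iff_isLittleO, Asymptotics.isLittleO_iff]
  intro κ hκ
  set C' := Real.exp (M * T) / M with hC'
  have hC'p : 0 < C' := by positivity
  set η := κ / (4 * C * C') with hη
  have hηp : 0 < η := by positivity
  obtain ⟨ρ, hρ, hl⟩ := unif_lin X hX _ ((isCompact_Icc (a := 0) (b := T)).image h1) hηp
  have hcl := flow_close φ hflow q T hρ
  have htend : Tendsto (fun z : E × E => (q + (z.1 - z.2))) (nhds (q, q)) (nhds q) := by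
    have : Continuous (fun z : E × E => (q + (z.1 - z.2))) := by fun_prop
    simpa using this.tendsto (q, q)
  have htend2 : Tendsto (fun z : E × E => (q + (z.1 - z.2), q)) (nhds (q, q)) (nhds (q, q)) := by
    rw [nhds_prod_eq (x := q) (y := q)]
    rw [nhds_prod_eq] at htend
    exact htend.prodMk (tendsto_const_nhds)
  have hcl2 : ∀ᶠ z in nhds (q, q), (∀ t ∈ Set.Icc 0 T, dist (φ t z.1) (φ t q) < ρ) ∧
      (∀ t ∈ Set.Icc 0 T, dist (φ t z.2) (φ t q) < ρ) := by
    rw [nhds_prod_eq]; exact hcl.prod_mk hcl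
  have hlin := (hasFDerivAt_iff_isLittleO.1 hA)
  rw [Asymptotics.isLittleO_iff] at hlin
  have hlin' := htend.eventually (hlin (half_pos hκ))
  filter_upwards [hlip, htend2.eventually hlip, hcl2, htend.eventually hcl, hlin'] with
    z hz1 hz2 hz3 hz4 hz5
  simp only [add_sub_cancel_left] at hz2 hz5
  set x' := q + (z.1 - z.2) with hx'
  have hd : ∀ t, HasDerivAt (fun t => (φ t z.1 - φ t z.2) - (φ t x' - φ t q))
      ((X (φ t z.1) - X (φ t z.2)) - (X (φ t x') - X (φ t q))) t :=
    fun t => ((hgen.2.2 z.1 t).sub (hgen.2.2 z.2 t)).sub ((hgen.2.2 x' t).sub (hgen.2.2 q t))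
  have := norm_le_gronwallBound_of_norm_deriv_right_le (a := 0) (b := T)
    (f := fun t => (φ t z.1 - φ t z.2) - (φ t x' - φ t q))
    (f' := fun t => ((X (φ t z.1) - X (φ t z.2)) - (X (φ t x') - X (φ t q))))
    (δ := 0) (K := M) (ε := 2 * η * C * ‖z.1 - z.2‖)
    (fun t _ => (hd t).continuousAt.continuousWithinAt)
    (fun t _ => (hd t).hasDerivWithinAt) (by simp [hgen.1, hx']) ?_ T ⟨hT.le, le_rfl⟩
  · have h2 := this.trans (gron_le le_rfl hM (by positivity) (T := T) (by simp))
    have h3 : 0 * Real.exp (M * T) + 2 * η * C * ‖z.1 - z.2‖ * (Real.exp (M * T) / M)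
        = κ / 2 * ‖z.1 - z.2‖ := by
      rw [← hC', hη]; field_simp; ring
    rw [h3] at h2
    calc _ = ‖((φ T z.1 - φ T z.2) - (φ T x' - φ T q)) + (φ T x' - φ T q - A (z.1 - z.2))‖ := by
          congr 1; abel
      _ ≤ _ := (norm_add_le _ _).trans (add_le_add h2 hz5)
      _ = _ := by ring
  · intro s hs
    have hs' : s ∈ Set.Icc 0 T := ⟨hs.1, hs.2.le⟩
    have h2 := hl (φ s q) ⟨s, hs', rfl⟩ _ _ (hz3.1 s hs') (hz3.2 s hs')
    have h2' := hl (φ s q) ⟨s, hs', rfl⟩ _ _ (hz4 s hs') (by simpa using hρ : dist (φ s q) (φ s q) < ρ)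
    have h3 := (fderiv ℝ X (φ s q)).le_of_opNorm_le (hMb s hs')
      ((φ s z.1 - φ s z.2) - (φ s x' - φ s q))
    have h5 := mul_le_mul_of_nonneg_left (hz1 s hs') hηp.le
    have h6 := mul_le_mul_of_nonneg_left (hz2 s hs') hηp.le
    set D := fderiv ℝ X (φ s q)
    have h7 : (X (φ s z.1) - X (φ s z.2)) - (X (φ s x') - X (φ s q)) =
      D ((φ s z.1 - φ s z.2) - (φ s x' - φ s q)) + (X (φ s z.1) - X (φ s z.2) -
        D (φ s z.1 - φ s z.2)) - (X (φ s x') - X (φ s q) - D (φ s x' - φ s q)) := by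
      rw [map_sub D (φ s z.1 - φ s z.2)]; abel
    rw [h7]
    refine (norm_sub_le _ _).trans ?_
    refine (add_le_add_left (norm_add_le _ _) _).trans ?_
    linarith

/-- The reversed flow. -/
lemma rev_flow (φ : ℝ → E → E) (hflow : IsFlow φ) : IsFlow (fun t x => φ (-t) x) := by
  refine ⟨?_, by simpa using hflow.2.1, fun s t x => ?_⟩
  · exact hflow.1.comp (continuous_fst.neg.prodMk continuous_snd)
  · simp only [neg_add, hflow.2.2]

lemma rev_gen (X : E → E) (φ : ℝ → E → E) (hgen : GeneratedBy X φ) :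
    GeneratedBy (fun x => - X x) (fun t x => φ (-t) x) := by
  refine ⟨by simpa using hgen.1, fun s t x => ?_, fun x t => ?_⟩
  · simp only [neg_add, hgen.2.1]
  · have := (hgen.2.2 x (-t)).scomp t (hasDerivAt_neg t)
    simpa [Function.comp_def] using this

/-- The derivative of the time-`T` map is injective. -/
lemma flow_deriv_inj [FiniteDimensional ℝ E] (X : E → E) (φ : ℝ → E → E) (hX : ContDiff ℝ 1 X)
    (hflow : IsFlow φ) (hgen : GeneratedBy X φ) (q : E) {T : ℝ} (hT : 0 < T) (hq : φ T q = q)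
    (A : E →L[ℝ] E) (hA : HasFDerivAt (φ T) A q) : Function.Injective A := by
  obtain ⟨C, hC, hlip⟩ := flow_lip _ _ hX.neg (rev_flow φ hflow) (rev_gen X φ hgen) q T
  rw [injective_iff_map_eq_zero]
  intro h hh
  by_contra hne
  have hlin := (hasFDerivAt_iff_isLittleO.1 hA)
  rw [Asymptotics.isLittleO_iff] at hlin
  have h1 := hlin (c := 1 / (2 * C)) (by positivity)
  have hcont : ContinuousAt (φ T) q := hA.continuousAt
  have ht : Tendsto (fun x => (φ T x, φ T q)) (nhds q) (nhds (q, q)) := by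
    rw [nhds_prod_eq]
    refine Tendsto.prodMk ?_ ?_
    · simpa [ContinuousAt, hq] using hcont
    · rw [hq]; exact tendsto_const_nhds
  have h2 := ht.eventually hlip
  have h3 : Tendsto (fun s : ℝ => q + s • h) (nhdsWithin 0 {0}ᶜ) (nhds q) := by
    have : Continuous (fun s : ℝ => q + s • h) := by fun_prop
    have := this.tendsto 0
    simp only [zero_smul, add_zero] at this
    exact this.mono_left nhdsWithin_le_nhds
  obtain ⟨s, hs, hs2, hs0⟩ := ((h3.eventually h1).and
    ((h3.eventually h2).and self_mem_nhdsWithin)).exists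
  have h4 := hs2 T ⟨hT.le, le_rfl⟩
  simp only [← hflow.2.2, neg_add_cancel, hflow.2.1, add_sub_cancel_left] at h4
  simp only [add_sub_cancel_left, map_smul, hh, smul_zero, sub_zero] at hs
  have h5 : 0 < ‖s • h‖ := norm_pos_iff.2 (smul_ne_zero hs0 hne)
  have h6 := mul_le_mul_of_nonneg_left hs hC.le
  have h7 : C * (1 / (2 * C) * ‖s • h‖) = ‖s • h‖ / 2 := by field_simp
  linarith
end Analysis

section Dynamics
variable {E : Type*} [NormedAddCommGroup E] [NormedSpace ℝ E]

/-- Hyperbolicity data of a periodic point: a period `T`, the strict derivative `B` of the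
time-`T` map, the central functional `c`, and maps measuring the stable and unstable parts. -/
def HypData (φ : ℝ → E → E) (q v : E) : Prop :=
  ∃ T : ℝ, 0 < T ∧ φ T q = q ∧ ∃ B : E ≃L[ℝ] E, HasStrictFDerivAt (φ T) (B : E →L[ℝ] E) q ∧
    ∃ (c : E →L[ℝ] ℝ) (d : ℕ) (Ps Pu : E →L[ℝ] (Fin d → ℂ)) (κ : ℝ), 0 < κ ∧
      (∀ x, c (B x) = c x) ∧ c v = 1 ∧
      (∀ x, c x = 0 → ‖x‖ ≤ κ * (‖Ps x‖ + ‖Pu x‖)) ∧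
      (∀ x, ‖Ps (B x)‖ ≤ ‖Ps x‖ / 4) ∧ (∀ x, ‖Pu x‖ ≤ ‖Pu (B x)‖ / 4)

lemma HypData.rev {φ : ℝ → E → E} (hflow : IsFlow φ) {q v : E} (h : HypData φ q v) :
    HypData (fun t x => φ (-t) x) q (-v) := by
  obtain ⟨T, hT, hq, B, hB, c, d, Ps, Pu, κ, hκ, hc, hcv, hn, hs, hu⟩ := h
  have hq' : φ (-T) q = q := by
    conv_lhs => rw [← hq]
    rw [← hflow.2.2]; simp [hflow.2.1]
  refine ⟨T, hT, hq', B.symm, ?_, -c, d, Pu, Ps, κ, hκ, fun x => ?_, by simp [hcv], fun x hx => ?_,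
    fun x => ?_, fun x => ?_⟩
  · apply HasStrictFDerivAt.of_local_left_inverse (f := φ T)
    · exact (hflow.1.comp (continuous_const.prodMk continuous_id)).continuousAt
    · have h0 : HasStrictFDerivAt (φ T) (B : E →L[ℝ] E) (φ (-T) q) := by rw [hq']; exact hB
      exact h0
    · refine Eventually.of_forall fun y => ?_
      rw [← hflow.2.2]; simp [hflow.2.1]
  · have := hc (B.symm x)
    simp only [ContinuousLinearEquiv.apply_symm_apply] at this
    simp [this]
  · rw [add_comm]; exact hn x (by simpa using hx)
  · simpa using hu (B.symm x)
  · simpa using hs (B.symm x)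

lemma seq_dichotomy (α β : ℕ → ℝ) (hα : ∀ n, 0 ≤ α n)
    (h1 : ∀ n, α (n + 1) ≤ α n / 4 + (α n + β n) / 8)
    (h2 : ∀ n, 4 * β n - (α n + β n) / 8 ≤ β (n + 1)) (C : ℝ) (hb : ∀ n, β n ≤ C) :
    (∀ n, β n ≤ α n) ∧ ∀ n, α n ≤ α 0 * (1 / 2) ^ n := by
  have key : ∀ n, β n ≤ α n := by
    intro n
    by_contra! hlt
    have hpos : 0 < β n := (hα n).trans_lt hlt
    have : ∀ k, α (n + k) ≤ β (n + k) ∧ 2 ^ k * β n ≤ β (n + k) := by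
      intro k
      induction k with
      | zero => simp [hlt.le]
      | succ k ih =>
        have a1 := h1 (n + k)
        have a2 := h2 (n + k)
        have a3 := hα (n + k)
        have : (2 : ℝ) ^ (k + 1) * β n = 2 * (2 ^ k * β n) := by ring
        rw [← add_assoc, this]
        constructor <;> linarith [ih.1, ih.2]
    obtain ⟨k, hk⟩ := pow_unbounded_of_one_lt (C / β n) (one_lt_two (α := ℝ))
    have h3 := (this k).2.trans (hb (n + k))
    rw [div_lt_iff₀ hpos] at hk
    linarith
  refine ⟨key, fun n => ?_⟩
  induction n with
  | zero => simp
  | succ n ih =>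
    have := h1 n
    have := key n
    have : α 0 * (1 / 2) ^ (n + 1) = α 0 * (1 / 2) ^ n / 2 := by ring
    linarith

/-- A point whose forward orbit stays close to that of `q` lies in the stable set of the orbit. -/
lemma stable_of_shadow (X : E → E) (φ : ℝ → E → E) (hXc : Continuous X)
    (hflow : IsFlow φ) (hgen : GeneratedBy X φ) (q : E) (h : HypData φ q (X q)) :
    ∃ ε > 0, ∀ y, (∀ t, 0 ≤ t → dist (φ t y) (φ t q) ≤ ε) → y ∈ WsOrb φ q := by
  obtain ⟨T, hT, hq, B, hB, c, d, Ps, Pu, κ, hκ, hc, hcv, hn, hs, hu⟩ := h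
  have hcurve : Continuous fun t => φ t q := hflow.1.comp (continuous_id.prodMk continuous_const)
  -- the curve `s ↦ φ s q`
  have hstr : HasStrictDerivAt (fun s => φ s q) (X q) 0 := by
    have := hasStrictDerivAt_of_hasDerivAt_of_continuousAt (x := (0 : ℝ))
      (f := fun s => φ s q) (f' := fun s => X (φ s q))
      (Eventually.of_forall fun s => hgen.2.2 q s) (hXc.comp hcurve).continuousAt
    simpa [hgen.1] using this
  have hfix : ∀ s, φ T (φ s q) = φ s q := by
    intro s
    rw [← hflow.2.2, add_comm, hflow.2.2, hq]
  set L := ‖X q‖ + 1 with hL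
  have hLp : 0 < L := by positivity
  set m := 1 / (2 * (‖c‖ + 1)) with hm
  have hmp : 0 < m := by positivity
  have hmc : ‖c‖ * m ≤ 1 / 2 := by
    rw [hm, mul_one_div, div_le_div_iff₀ (by positivity) (by positivity)]; linarith [norm_nonneg c]
  have hm1 : m ≤ 1 := by
    rw [hm, div_le_one (by positivity)]; linarith [norm_nonneg c]
  set δ := 1 / (8 * ((‖Ps‖ + ‖Pu‖ + 1) * ((1 + 2 * L * ‖c‖) * κ))) with hδ
  have hδp : 0 < δ := by positivity
  have e1 := hasStrictFDerivAt_iff_isLittleO.1 hstr.hasStrictFDerivAt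
  rw [Asymptotics.isLittleO_iff] at e1
  have e1 := e1 hmp
  have e2 := hasStrictFDerivAt_iff_isLittleO.1 hB
  rw [Asymptotics.isLittleO_iff] at e2
  have e2 := e2 hδp
  rw [Metric.eventually_nhds_iff] at e1 e2
  obtain ⟨r1, hr1, e1⟩ := e1
  obtain ⟨ρ, hρ, e2⟩ := e2
  obtain ⟨r2, hr2, e3⟩ := Metric.continuousAt_iff.1 (hcurve.continuousAt (x := 0)) ρ hρ
  set r := min r1 r2 / 2 with hr
  have hrp : 0 < r := by positivity
  have hrr1 : r < r1 := by
    have : min r1 r2 ≤ r1 := min_le_left _ _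
    linarith
  have hrr2 : r < r2 := by
    have : min r1 r2 ≤ r2 := min_le_right _ _
    linarith
  have hcurveE : ∀ s s', |s| ≤ r → |s'| ≤ r →
      ‖φ s q - φ s' q - (s - s') • X q‖ ≤ m * |s - s'| := by
    intro s s' h1 h2
    have := @e1 (s, s') (by
      rw [dist_eq_norm, Prod.norm_def]
      simp only [Prod.mk_zero_zero, sub_zero, Real.norm_eq_abs]
      exact max_lt (h1.trans_lt hrr1) (h2.trans_lt hrr1))
    simpa using this
  have hcurveL : ∀ s s', |s| ≤ r → |s'| ≤ r → ‖φ s q - φ s' q‖ ≤ L * |s - s'| := by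
    intro s s' h1 h2
    have h3 := hcurveE s s' h1 h2
    have h4 := norm_le_norm_add_norm_sub' (φ s q - φ s' q) ((s - s') • X q)
    rw [norm_smul, Real.norm_eq_abs] at h4
    have h5 : m * |s - s'| ≤ 1 * |s - s'| := by gcongr
    rw [hL]; linarith
  have hcurveC : ∀ s s', |s| ≤ r → |s'| ≤ r →
      |c (φ s q - φ s' q) - (s - s')| ≤ 1 / 2 * |s - s'| := by
    intro s s' h1 h2
    have h3 := (c.le_opNorm_of_le (hcurveE s s' h1 h2))
    rw [map_sub, map_smul, hcv, Real.norm_eq_abs] at h3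
    simp only [smul_eq_mul, mul_one] at h3
    refine h3.trans ?_
    rw [← mul_assoc]; gcongr
  have hcurveI : ∀ s s', |s| ≤ r → |s'| ≤ r → |s - s'| ≤ 2 * |c (φ s q - φ s' q)| := by
    intro s s' h1 h2
    have h3 := hcurveC s s' h1 h2
    have := abs_sub_abs_le_abs_sub (s - s') (c (φ s q - φ s' q))
    rw [abs_sub_comm (s - s')] at this
    linarith
  -- choice of phase
  have hphase : ∀ z, ‖c‖ * ‖z - q‖ ≤ r / 2 → ∃ s, |s| ≤ r ∧ c (z - φ s q) = 0 := by
    intro z hz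
    have hzc : |c (z - q)| ≤ r / 2 := by
      rw [← Real.norm_eq_abs]; exact (c.le_opNorm _).trans hz
    rw [abs_le] at hzc
    have hcont : Continuous fun s => c (φ s q - q) := c.continuous.comp (hcurve.sub continuous_const)
    have hr0 : |(0 : ℝ)| ≤ r := by simpa using hrp.le
    have hp := hcurveC r 0 (by rw [abs_of_pos hrp]) hr0
    have hmm := hcurveC (-r) 0 (by rw [abs_neg, abs_of_pos hrp]) hr0
    simp only [sub_zero, hgen.1, abs_neg, abs_of_pos hrp] at hp hmm
    rw [abs_le] at hp hmm
    obtain ⟨s, hs, hsz⟩ := intermediate_value_Icc (by linarith : -r ≤ r) hcont.continuousOn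
      (show c (z - q) ∈ Set.Icc _ _ from ⟨by linarith, by linarith⟩)
    refine ⟨s, abs_le.2 hs, ?_⟩
    have : z - φ s q = (z - q) - (φ s q - q) := by abel
    rw [this, map_sub, sub_eq_zero]
    exact hsz.symm
  set ε := min (ρ / 2) (r / (2 * (‖c‖ + 1))) with hε
  have hεp : 0 < ε := by positivity
  refine ⟨ε, hεp, fun y hy => ?_⟩
  -- the orbit under the time-T map
  set Y : ℕ → E := fun n => φ (n * T) y with hY
  have hTq : ∀ n : ℕ, ∀ s, φ (n * T) (φ s q) = φ s q := by
    intro n s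
    induction n with
    | zero => simp [hflow.2.1]
    | succ n ih =>
      have : ((n + 1 : ℕ) : ℝ) * T = n * T + T := by push_cast; ring
      rw [this, hflow.2.2, hfix, ih]
  have hTq0 : ∀ n : ℕ, φ (n * T) q = q := by
    intro n; simpa [hflow.2.1] using hTq n 0
  have hYs : ∀ n, Y (n + 1) = φ T (Y n) := by
    intro n
    have : ((n + 1 : ℕ) : ℝ) * T = T + n * T := by push_cast; ring
    simp only [hY]
    rw [this, hflow.2.2]
  have hYq : ∀ n, ‖Y n - q‖ ≤ ε := by
    intro n
    have := hy (n * T) (by positivity)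
    rwa [hTq0, dist_eq_norm] at this
  have hYc : ∀ n, ∃ s, |s| ≤ r ∧ c (Y n - φ s q) = 0 := by
    intro n
    apply hphase
    have h1 : ‖Y n - q‖ ≤ r / (2 * (‖c‖ + 1)) := (hYq n).trans (min_le_right _ _)
    calc ‖c‖ * ‖Y n - q‖ ≤ (‖c‖ + 1) * (r / (2 * (‖c‖ + 1))) := by gcongr; linarith
      _ = r / 2 := by field_simp
  choose s hsr hsc using hYc
  set w : ℕ → E := fun n => Y n - φ (s n) q with hw
  have hrem : ∀ n, ‖Y (n + 1) - φ (s n) q - B (w n)‖ ≤ δ * ‖w n‖ := by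
    intro n
    have := @e2 (Y n, φ (s n) q) (by
      rw [Prod.dist_eq]
      refine max_lt ?_ ?_
      · rw [dist_eq_norm]
        have : ε ≤ ρ / 2 := min_le_left _ _
        simp only
        linarith [hYq n]
      · have := @e3 (s n) (by simpa using (hsr n).trans_lt hrr2)
        simpa [hgen.1] using this)
    simp only [hfix] at this
    rw [hYs]; exact this
  have hsdiff : ∀ n, |s (n + 1) - s n| ≤ 2 * ‖c‖ * δ * ‖w n‖ := by
    intro n
    have h1 := hcurveI _ _ (hsr (n + 1)) (hsr n)
    have h2 : c (φ (s (n + 1)) q - φ (s n) q) = c (Y (n + 1) - φ (s n) q - B (w n)) := by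
      have a1 := hsc (n + 1)
      have a2 := hsc n
      have a3 := hc (w n)
      simp only [hw, map_sub] at a1 a2 a3 ⊢
      linarith
    have h3 := c.le_opNorm_of_le (hrem n)
    rw [← h2, Real.norm_eq_abs] at h3
    calc _ ≤ _ := h1
      _ ≤ 2 * (‖c‖ * (δ * ‖w n‖)) := by gcongr
      _ = _ := by ring
  have hstep : ∀ n, ‖w (n + 1) - B (w n)‖ ≤ (1 + 2 * L * ‖c‖) * δ * ‖w n‖ := by
    intro n
    have h1 : w (n + 1) - B (w n) =
        (Y (n + 1) - φ (s n) q - B (w n)) - (φ (s (n + 1)) q - φ (s n) q) := by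
      simp only [hw]; abel
    rw [h1]
    have h2 := hcurveL _ _ (hsr (n + 1)) (hsr n)
    have h3 : L * |s (n + 1) - s n| ≤ L * (2 * ‖c‖ * δ * ‖w n‖) := by gcongr; exact hsdiff n
    calc _ ≤ _ := norm_sub_le _ _
      _ ≤ δ * ‖w n‖ + L * (2 * ‖c‖ * δ * ‖w n‖) := add_le_add (hrem n) (h2.trans h3)
      _ = _ := by ring
  have hwn : ∀ n, ‖w n‖ ≤ κ * (‖Ps (w n)‖ + ‖Pu (w n)‖) := fun n => hn _ (hsc n)
  have hsmall : ∀ (P : E →L[ℝ] (Fin d → ℂ)), ‖P‖ ≤ ‖Ps‖ + ‖Pu‖ + 1 → ∀ n,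
      ‖P (w (n + 1)) - P (B (w n))‖ ≤ (‖Ps (w n)‖ + ‖Pu (w n)‖) / 8 := by
    intro P hP n
    rw [← map_sub]
    calc _ ≤ _ := P.le_opNorm _
      _ ≤ (‖Ps‖ + ‖Pu‖ + 1) * ((1 + 2 * L * ‖c‖) * δ * (κ * (‖Ps (w n)‖ + ‖Pu (w n)‖))) := by
        gcongr
        refine (hstep n).trans ?_
        gcongr
        exact hwn n
      _ = _ := by
        rw [hδ]
        have : 1 + 2 * L * ‖c‖ ≠ 0 := by positivity
        field_simp
  have hbdd : ∀ n, ‖w n‖ ≤ ε + L * r := by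
    intro n
    have h0 : |(0:ℝ)| ≤ r := by simpa using hrp.le
    have h1 := hcurveL _ _ (hsr n) h0
    rw [hgen.1, sub_zero] at h1
    have h2 : w n = (Y n - q) - (φ (s n) q - q) := by simp only [hw]; abel
    rw [h2]
    refine (norm_sub_le _ _).trans (add_le_add (hYq n) (h1.trans ?_))
    gcongr; exact hsr n
  obtain ⟨hba, hdec⟩ := seq_dichotomy (fun n => ‖Ps (w n)‖) (fun n => ‖Pu (w n)‖)
    (fun n => norm_nonneg _)
    (fun n => by
      have h1 := hsmall Ps (by linarith [norm_nonneg Pu]) n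
      have h2 := hs (w n)
      have h3 := norm_le_norm_add_norm_sub' (Ps (w (n + 1))) (Ps (B (w n)))
      linarith)
    (fun n => by
      have h1 := hsmall Pu (by linarith [norm_nonneg Ps]) n
      have h2 := hu (w n)
      have h3 := norm_le_norm_add_norm_sub (Pu (w (n + 1))) (Pu (B (w n)))
      linarith)
    (‖Pu‖ * (ε + L * r)) (fun n => Pu.le_opNorm_of_le (hbdd n))
  have hwdec : ∀ n, ‖w n‖ ≤ (2 * κ * ‖Ps (w 0)‖) * (1 / 2) ^ n := by
    intro n
    calc _ ≤ _ := hwn n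
      _ ≤ κ * (‖Ps (w 0)‖ * (1 / 2) ^ n + ‖Ps (w 0)‖ * (1 / 2) ^ n) := by
        gcongr
        · exact hdec n
        · exact (hba n).trans (hdec n)
      _ = _ := by ring
  have hcauchy : CauchySeq s := by
    refine cauchySeq_of_le_geometric (1 / 2) (2 * ‖c‖ * δ * (2 * κ * ‖Ps (w 0)‖)) (by norm_num)
      fun n => ?_
    rw [dist_comm, Real.dist_eq, mul_assoc]
    refine (hsdiff n).trans ?_
    gcongr; exact hwdec n
  obtain ⟨s0, hs0⟩ := cauchySeq_tendsto_of_complete hcauchy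
  have hw0 : Tendsto w atTop (nhds 0) := by
    refine squeeze_zero_norm hwdec ?_
    have := (tendsto_pow_atTop_nhds_zero_of_lt_one (r := (1 / 2 : ℝ)) (by norm_num)
      (by norm_num)).const_mul (2 * κ * ‖Ps (w 0)‖)
    simpa using this
  have hYlim : Tendsto Y atTop (nhds (φ s0 q)) := by
    have := hw0.add ((hcurve.tendsto s0).comp hs0)
    simpa [hw, Function.comp_def] using this
  -- conclusion
  simp only [WsOrb, Set.mem_iUnion]
  refine ⟨s0, ?_⟩
  change Tendsto (fun t : ℝ => dist (φ t y) (φ t (φ s0 q))) atTop (nhds 0)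
  rw [Metric.tendsto_atTop]
  intro η hη
  obtain ⟨N, hN⟩ := eventually_atTop.1 (hYlim.eventually (flow_close φ hflow (φ s0 q) T hη))
  refine ⟨N * T, fun t ht => ?_⟩
  have ht0 : 0 ≤ t := le_trans (by positivity) ht
  have hfl := Nat.floor_le (a := t / T) (by positivity)
  have hfl2 := Nat.lt_floor_add_one (t / T)
  set n := ⌊t / T⌋₊ with hnn
  rw [le_div_iff₀ hT] at hfl
  rw [div_lt_iff₀ hT] at hfl2
  have hNn : N ≤ n := by
    apply Nat.le_floor
    rwa [le_div_iff₀ hT]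
  have h1 := hN n hNn (t - n * T) ⟨by linarith, by linarith⟩
  have h2 : ∀ z, φ (t - n * T) (φ (n * T) z) = φ t z := by
    intro z; rw [← hflow.2.2]; simp
  have h3 := h2 (φ s0 q)
  rw [hTq] at h3
  simp only [hY] at h1
  rw [h2, h3] at h1
  rw [Real.dist_eq, sub_zero, abs_of_nonneg dist_nonneg]
  exact h1
end Dynamics

section LinAlg
variable {V : Type*} [AddCommGroup V] [Module ℂ V]

/-- Vectors whose forward orbit under `a` is summable. -/
def decaySub {F : Type*} [NormedAddCommGroup F] [NormedSpace ℂ F] (e : V →ₗ[ℂ] F)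
    (a : Module.End ℂ V) : Submodule ℂ V where
  carrier := {x | Summable fun n : ℕ => ‖e ((a ^ n) x)‖}
  zero_mem' := by simp
  add_mem' := by
    intro x y hx hy
    refine Summable.of_nonneg_of_le (fun _ => norm_nonneg _) (fun n => ?_) (hx.add hy)
    rw [map_add, map_add]; exact norm_add_le _ _
  smul_mem' := by
    intro k x hx
    have := hx.mul_left ‖k‖
    refine this.congr fun n => ?_
    rw [map_smul, map_smul, norm_smul]

lemma genEig_le_decay {F : Type*} [NormedAddCommGroup F] [NormedSpace ℂ F] (e : V →ₗ[ℂ] F)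
    (a : Module.End ℂ V) (μ : ℂ) (hμ : ‖μ‖ < 1) : a.maxGenEigenspace μ ≤ decaySub e a := by
  intro x hx
  rw [Module.End.mem_maxGenEigenspace] at hx
  obtain ⟨k, hk⟩ := hx
  induction k generalizing x with
  | zero => simp only [pow_zero, Module.End.one_apply] at hk; rw [hk]; exact zero_mem _
  | succ k ih =>
    rw [pow_succ, Module.End.mul_apply] at hk
    have hy := ih hk
    have hy' : Summable fun n : ℕ => ‖e ((a ^ n) ((a - μ • 1) x))‖ := hy
    change Summable fun n : ℕ => ‖e ((a ^ n) x)‖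
    have hrec : ∀ n, ‖e ((a ^ (n + 1)) x)‖ ≤ ‖μ‖ * ‖e ((a ^ n) x)‖ + ‖e ((a ^ n) ((a - μ • 1) x))‖ := by
      intro n
      have : (a ^ (n + 1)) x = μ • (a ^ n) x + (a ^ n) ((a - μ • 1) x) := by
        rw [pow_succ, Module.End.mul_apply]
        simp
      rw [this, map_add, map_smul]
      refine (norm_add_le _ _).trans ?_
      rw [norm_smul]
    set Z := ∑' n : ℕ, ‖e ((a ^ n) ((a - μ • 1) x))‖
    refine summable_of_sum_range_le (c := (‖e x‖ + Z) / (1 - ‖μ‖)) (fun _ => norm_nonneg _) fun n => ?_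
    rw [le_div_iff₀ (by linarith)]
    have h1 : ∑ i ∈ Finset.range (n + 1), ‖e ((a ^ i) x)‖ ≤
        ‖e x‖ + (‖μ‖ * ∑ i ∈ Finset.range n, ‖e ((a ^ i) x)‖ + Z) := by
      rw [Finset.sum_range_succ', add_comm]
      simp only [pow_zero, Module.End.one_apply]
      refine add_le_add le_rfl ?_
      refine (Finset.sum_le_sum fun i _ => hrec i).trans ?_
      rw [Finset.sum_add_distrib, ← Finset.mul_sum]
      exact add_le_add le_rfl (hy'.sum_le_tsum _ (fun _ _ => norm_nonneg _))
    rw [Finset.sum_range_succ] at h1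
    nlinarith [norm_nonneg (e ((a ^ n) x))]

lemma genEig_inv (a b : Module.End ℂ V) (hab : a * b = 1) (hba : b * a = 1) (μ : ℂ) (hμ : μ ≠ 0) :
    a.maxGenEigenspace μ ≤ b.maxGenEigenspace μ⁻¹ := by
  intro x hx
  rw [Module.End.mem_maxGenEigenspace] at hx ⊢
  obtain ⟨k, hk⟩ := hx
  refine ⟨k, ?_⟩
  have h1 : b - μ⁻¹ • 1 = ((-μ⁻¹) • b) * (a - μ • 1) := by
    rw [mul_sub, smul_mul_assoc, hba]
    rw [mul_smul_comm, mul_one, smul_smul]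
    simp [hμ]; abel
  have hcomm : Commute ((-μ⁻¹) • b) (a - μ • 1) := by
    apply Commute.smul_left
    apply Commute.sub_right
    · exact hba.trans hab.symm
    · exact (Commute.one_right b).smul_right μ
  rw [h1, hcomm.mul_pow, Module.End.mul_apply, hk, map_zero]

/-- Sum of the generalized eigenspaces with eigenvalue in `s`. -/
def eigSum (a : Module.End ℂ V) (s : Set ℂ) : Submodule ℂ V := ⨆ μ ∈ s, a.maxGenEigenspace μ

lemma eigSum_isCompl [FiniteDimensional ℂ V] (a : Module.End ℂ V) (s : Set ℂ) :
    IsCompl (eigSum a s) (eigSum a sᶜ) := by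
  constructor
  · exact (Module.End.independent_maxGenEigenspace a).disjoint_biSup_biSup disjoint_compl_right
  · rw [codisjoint_iff, eq_top_iff, ← Module.End.iSup_maxGenEigenspace_eq_top a]
    refine iSup_le fun μ => ?_
    by_cases h : μ ∈ s
    · exact (le_biSup a.maxGenEigenspace h).trans le_sup_left
    · exact (le_biSup a.maxGenEigenspace (i := μ) (show μ ∈ sᶜ from h)).trans le_sup_right

lemma eigSum_inv (a : Module.End ℂ V) (s : Set ℂ) : ∀ x ∈ eigSum a s, a x ∈ eigSum a s := by
  have : eigSum a s ≤ (eigSum a s).comap a := by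
    refine iSup₂_le fun μ hμ => ?_
    intro x hx
    have := Module.End.mapsTo_maxGenEigenspace_of_comm (Commute.refl a) μ hx
    exact (le_biSup a.maxGenEigenspace hμ) this
  exact this

lemma proj_comm [FiniteDimensional ℂ V] (a : Module.End ℂ V) (s : Set ℂ) (x : V) :
    Submodule.projection _ _ (eigSum_isCompl a s) (a x) =
      a (Submodule.projection _ _ (eigSum_isCompl a s) x) := by
  set P := Submodule.projection _ _ (eigSum_isCompl a s)
  have hx := Submodule.projection_add_projection_eq_self (eigSum_isCompl a s) x
  have h1 := eigSum_inv a s _ (Submodule.projection_apply_mem (eigSum_isCompl a s) x)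
  have h2 := eigSum_inv a sᶜ _ (Submodule.projection_apply_mem (eigSum_isCompl a s).symm x)
  conv_lhs => rw [← hx]
  rw [map_add, map_add, Submodule.projection_apply_of_mem_left _ h1,
    Submodule.projection_apply_of_mem_right _ h2, add_zero]

/-- Uniform decay on an invariant sum of eigenspaces. -/
lemma unif_decay {d : ℕ} (e : V ≃ₗ[ℂ] (Fin d → ℂ)) (b P : Module.End ℂ V) (S : Submodule ℂ V)
    (hPS : ∀ x, P x ∈ S) (hPid : ∀ x ∈ S, P x = x)
    (hS : S ≤ decaySub (e : V →ₗ[ℂ] (Fin d → ℂ)) b) :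
    ∀ᶠ n : ℕ in atTop, ∀ x ∈ S, ‖e ((b ^ n) x)‖ ≤ ‖e x‖ / 4 := by
  have h1 : ∀ i : Fin d, Tendsto (fun n : ℕ => ‖e ((b ^ n) (P (e.symm (Pi.single i 1))))‖) atTop
      (nhds 0) := fun i => Summable.tendsto_atTop_zero (hS (hPS _))
  have h2 : Tendsto (fun n : ℕ => ∑ i : Fin d, ‖e ((b ^ n) (P (e.symm (Pi.single i 1))))‖) atTop
      (nhds 0) := by
    simpa using tendsto_finsetSum Finset.univ (fun i _ => h1 i)
  filter_upwards [h2.eventually_lt_const (show (0 : ℝ) < 1 / 4 by norm_num)] with n hn x hx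
  have hx' : x = ∑ i : Fin d, (e x i) • P (e.symm (Pi.single i 1)) := by
    conv_lhs => rw [← hPid x hx, ← e.symm_apply_apply x, pi_eq_sum_univ' (e x)]
    simp only [map_sum, map_smul]
  conv_lhs => rw [hx']
  simp only [map_sum, map_smul]
  calc _ ≤ ∑ i : Fin d, ‖e x‖ * ‖e ((b ^ n) (P (e.symm (Pi.single i 1))))‖ := by
        refine (norm_sum_le _ _).trans (Finset.sum_le_sum fun i _ => ?_)
        rw [norm_smul]
        gcongr
        exact norm_le_pi_norm (e x) i
    _ = ‖e x‖ * ∑ i : Fin d, ‖e ((b ^ n) (P (e.symm (Pi.single i 1))))‖ := by rw [Finset.mul_sum]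
    _ ≤ ‖e x‖ * (1 / 4) := by gcongr
    _ = _ := by ring

lemma mem_spectrum_of_genEig [FiniteDimensional ℂ V] (a : Module.End ℂ V) (μ : ℂ)
    (h : a.maxGenEigenspace μ ≠ ⊥) : μ ∈ spectrum ℂ a := by
  rw [← Module.End.hasEigenvalue_iff_mem_spectrum]
  have h' : a.HasUnifEigenvalue μ ⊤ := h
  exact h'.lt zero_lt_one
end LinAlg

section Cx
variable {E : Type*} [NormedAddCommGroup E] [NormedSpace ℝ E]

/-- The inclusion of `E` in its complexification. -/
noncomputable def cxInc : E →ₗ[ℝ] (ℂ ⊗[ℝ] E) := TensorProduct.mk ℝ ℂ E 1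

lemma cxInc_inj : Function.Injective (cxInc : E → ℂ ⊗[ℝ] E) := by
  have h1 := Module.Flat.rTensor_preserves_injective_linearMap (M := E) (Algebra.linearMap ℝ ℂ)
    (algebraMap ℝ ℂ).injective
  have h2 := h1.comp (TensorProduct.lid ℝ E).symm.injective
  intro x y hxy
  apply h2
  simpa [cxInc] using hxy

lemma cxEnd_inc (A : E →L[ℝ] E) (x : E) : cxEnd A (cxInc x) = cxInc (A x) := by
  simp [cxEnd, cxInc]

lemma cxEnd_pow_inc (A : E →L[ℝ] E) (n : ℕ) (x : E) :
    ((cxEnd A) ^ n) (cxInc x) = cxInc ((A ^ n) x) := by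
  induction n with
  | zero => simp
  | succ n ih => rw [pow_succ', pow_succ', Module.End.mul_apply, ih, cxEnd_inc]; rfl

lemma cxEnd_mul (A B : E →L[ℝ] E) : cxEnd (A * B) = cxEnd A * cxEnd B := by
  simp only [cxEnd]
  exact LinearMap.baseChange_comp (A := ℂ) (B : E →ₗ[ℝ] E) (A : E →ₗ[ℝ] E)

lemma cxEnd_one : cxEnd (1 : E →L[ℝ] E) = 1 := by
  simp only [cxEnd]
  exact LinearMap.baseChange_id

set_option maxHeartbeats 800000 in
lemma hyp_linear [FiniteDimensional ℝ E] (A : E ≃L[ℝ] E) (v : E) (hv : v ≠ 0) (hAv : A v = v)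
    (hspec : ∀ μ ∈ spectrum ℂ (cxEnd (A : E →L[ℝ] E)), μ = 1 ∨ ‖μ‖ ≠ 1)
    (hfin : Module.finrank ℂ (Module.End.maxGenEigenspace (cxEnd (A : E →L[ℝ] E)) 1) = 1) :
    ∃ N : ℕ, 0 < N ∧
    ∃ (c : E →L[ℝ] ℝ) (d : ℕ) (Ps Pu : E →L[ℝ] (Fin d → ℂ)) (κ : ℝ), 0 < κ ∧
      (∀ x, c (A x) = c x) ∧ c v = 1 ∧
      (∀ x, c x = 0 → ‖x‖ ≤ κ * (‖Ps x‖ + ‖Pu x‖)) ∧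
      (∀ x, ‖Ps (((A : E →L[ℝ] E) ^ N) x)‖ ≤ ‖Ps x‖ / 4) ∧
      (∀ x, ‖Pu x‖ ≤ ‖Pu (((A : E →L[ℝ] E) ^ N) x)‖ / 4) := by
  set a := cxEnd (A : E →L[ℝ] E) with ha
  set b := cxEnd (A.symm : E →L[ℝ] E) with hb
  have hab : a * b = 1 := by
    rw [ha, hb, ← cxEnd_mul, ← cxEnd_one]; congr 1; ext x; simp
  have hba : b * a = 1 := by
    rw [ha, hb, ← cxEnd_mul, ← cxEnd_one]; congr 1; ext x; simp
  have hιv : (cxInc v : ℂ ⊗[ℝ] E) ≠ 0 := by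
    rw [← map_zero cxInc]; exact fun h => hv (cxInc_inj h)
  have haιv : a (cxInc v) = cxInc v := by
    rw [ha, cxEnd_inc]; congr 1
  have hvG : cxInc v ∈ a.maxGenEigenspace 1 := by
    rw [Module.End.mem_maxGenEigenspace]
    exact ⟨1, by simp [haιv]⟩
  have hG : ∀ z ∈ a.maxGenEigenspace 1, ∃ k : ℂ, z = k • cxInc v := by
    intro z hz
    obtain ⟨k, hk⟩ := (finrank_eq_one_iff_of_nonzero' (⟨cxInc v, hvG⟩ : a.maxGenEigenspace 1)
      (fun h => hιv (congrArg Subtype.val h))).1 hfin ⟨z, hz⟩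
    exact ⟨k, (congrArg Subtype.val hk).symm⟩
  -- the central functional
  have hvR : v ∉ ((A : E →ₗ[ℝ] E) - 1).range := by
    rintro ⟨z, hz⟩
    have hz1 : a (cxInc z) - cxInc z = cxInc v := by
      rw [ha, cxEnd_inc, ← map_sub]; congr 1
    have hz2 : cxInc z ∈ a.maxGenEigenspace 1 := by
      rw [Module.End.mem_maxGenEigenspace]
      refine ⟨2, ?_⟩
      rw [pow_two, Module.End.mul_apply]
      simp only [one_smul, LinearMap.sub_apply, Module.End.one_apply]
      rw [hz1, haιv, sub_self]
    obtain ⟨k, hk⟩ := hG _ hz2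
    rw [hk, map_smul, haιv, sub_self] at hz1
    exact hιv hz1.symm
  obtain ⟨c0, hc0v, hc0⟩ := Submodule.exists_le_ker_of_notMem hvR
  set c : E →ₗ[ℝ] ℝ := (c0 v)⁻¹ • c0 with hcdef
  have hcv : c v = 1 := by simp [hcdef, hc0v]
  have hcA : ∀ x, c (A x) = c x := by
    intro x
    have h1 : c0 (A x - x) = 0 := hc0 ⟨x, rfl⟩
    rw [map_sub, sub_eq_zero] at h1
    simp [hcdef, h1]
  -- complexified functional
  set cC : (ℂ ⊗[ℝ] E) →ₗ[ℂ] ℂ :=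
    (TensorProduct.AlgebraTensorModule.rid ℝ ℂ ℂ).toLinearMap ∘ₗ c.baseChange ℂ with hcC
  have hcCι : ∀ x, cC (cxInc x) = (c x : ℂ) := by
    intro x
    simp [hcC, cxInc]
  have hcCa : cC ∘ₗ a = cC := by
    apply TensorProduct.AlgebraTensorModule.ext
    intro k x
    simp [hcC, ha, cxEnd, hcA]
  have hcCa' : ∀ z, cC (a z) = cC z := fun z => LinearMap.congr_fun hcCa z
  have hcCG : ∀ μ : ℂ, μ ≠ 1 → a.maxGenEigenspace μ ≤ cC.ker := by
    intro μ hμ z hz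
    rw [Module.End.mem_maxGenEigenspace] at hz
    obtain ⟨k, hk⟩ := hz
    have h1 : ∀ k, cC (((a - μ • 1) ^ k) z) = (1 - μ) ^ k * cC z := by
      intro k
      induction k with
      | zero => simp
      | succ k ih =>
        rw [pow_succ', Module.End.mul_apply]
        simp only [LinearMap.sub_apply, LinearMap.smul_apply, Module.End.one_apply, map_sub,
          map_smul, hcCa', ih, smul_eq_mul]
        ring
    have h2 := h1 k
    rw [hk, map_zero] at h2
    have h3 : (1 - μ) ^ k ≠ 0 := pow_ne_zero _ (sub_ne_zero.2 hμ.symm)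
    rw [LinearMap.mem_ker]
    exact (mul_eq_zero.1 h2.symm).resolve_left h3
  set s : Set ℂ := {μ | ‖μ‖ < 1} with hs
  set u : Set ℂ := {μ | 1 < ‖μ‖} with hu
  set S := Submodule.projection _ _ (eigSum_isCompl a s) with hS
  set U := Submodule.projection _ _ (eigSum_isCompl a u) with hU
  have htop : ⊤ ≤ eigSum a s ⊔ eigSum a u ⊔ a.maxGenEigenspace 1 := by
    rw [← Module.End.iSup_maxGenEigenspace_eq_top a]
    refine iSup_le fun μ => ?_
    by_cases hbot : a.maxGenEigenspace μ = ⊥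
    · rw [hbot]; exact bot_le
    have hμ : μ ∈ spectrum ℂ a := by
      exact mem_spectrum_of_genEig a μ hbot
    rcases hspec μ hμ with h | h
    · rw [h]; exact le_sup_right
    · rcases lt_or_gt_of_ne h with h | h
      · exact ((le_biSup a.maxGenEigenspace (show μ ∈ s from h)).trans le_sup_left).trans le_sup_left
      · exact ((le_biSup a.maxGenEigenspace (show μ ∈ u from h)).trans le_sup_right).trans le_sup_left
  have hinj : ∀ x, c x = 0 → S (cxInc x) = 0 → U (cxInc x) = 0 → x = 0 := by
    intro x hx hxs hxu
    obtain ⟨z, hz, g, hg, hzg⟩ := Submodule.mem_sup.1 (htop (Submodule.mem_top (x := cxInc x)))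
    obtain ⟨z1, hz1, z2, hz2, hzz⟩ := Submodule.mem_sup.1 hz
    have a1 : eigSum a u ≤ eigSum a sᶜ :=
      biSup_mono fun μ (hμ : 1 < ‖μ‖) => (not_lt.2 hμ.le : ¬ ‖μ‖ < 1)
    have a2 : eigSum a s ≤ eigSum a uᶜ :=
      biSup_mono fun μ (hμ : ‖μ‖ < 1) => (not_lt.2 hμ.le : ¬ 1 < ‖μ‖)
    have a3 : a.maxGenEigenspace 1 ≤ eigSum a sᶜ :=
      le_biSup a.maxGenEigenspace (i := 1) (by simp [hs])
    have a4 : a.maxGenEigenspace 1 ≤ eigSum a uᶜ :=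
      le_biSup a.maxGenEigenspace (i := 1) (by simp [hu])
    have hz10 : z1 = 0 := by
      rw [← hzg, ← hzz, map_add, map_add, hS, Submodule.projection_apply_of_mem_left _ hz1,
        Submodule.projection_apply_of_mem_right _ (a1 hz2),
        Submodule.projection_apply_of_mem_right _ (a3 hg)] at hxs
      simpa using hxs
    have hz20 : z2 = 0 := by
      rw [← hzg, ← hzz, map_add, map_add, hU, Submodule.projection_apply_of_mem_left _ hz2,
        Submodule.projection_apply_of_mem_right _ (a2 hz1),
        Submodule.projection_apply_of_mem_right _ (a4 hg)] at hxu
      simpa using hxu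
    obtain ⟨k, hk⟩ := hG g hg
    rw [hz10, hz20, zero_add] at hzz
    rw [← hzz, zero_add, hk] at hzg
    have h1 := hcCι x
    rw [← hzg, map_smul, hcCι, hcv, hx] at h1
    have hk0 : k = 0 := by simpa using h1
    rw [hk0, zero_smul] at hzg
    exact cxInc_inj (by rw [← hzg, map_zero])
  let e : (ℂ ⊗[ℝ] E) ≃ₗ[ℂ] (Fin (Module.finrank ℂ (ℂ ⊗[ℝ] E)) → ℂ) :=
    (Module.finBasis ℂ (ℂ ⊗[ℝ] E)).equivFun
  have hdS : eigSum a s ≤ decaySub (e : _ →ₗ[ℂ] (Fin (Module.finrank ℂ (ℂ ⊗[ℝ] E)) → ℂ)) a :=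
    iSup₂_le fun μ hμ => genEig_le_decay _ a μ hμ
  have hdU : eigSum a u ≤ decaySub (e : _ →ₗ[ℂ] (Fin (Module.finrank ℂ (ℂ ⊗[ℝ] E)) → ℂ)) b := by
    refine iSup₂_le fun μ (hμ : 1 < ‖μ‖) => ?_
    have hμ0 : μ ≠ 0 := by
      rintro rfl; simp at hμ; linarith
    refine (genEig_inv a b hab hba μ hμ0).trans (genEig_le_decay _ b _ ?_)
    rw [norm_inv]; exact inv_lt_one_of_one_lt₀ hμ
  have hE1 := unif_decay e a S (eigSum a s) (Submodule.projection_apply_mem _)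
    (fun x hx => Submodule.projection_apply_of_mem_left _ hx) hdS
  have hE2 := unif_decay e b U (eigSum a u) (Submodule.projection_apply_mem _)
    (fun x hx => Submodule.projection_apply_of_mem_left _ hx) hdU
  obtain ⟨N, ⟨hN1, hN2⟩, hN⟩ := ((hE1.and hE2).and (eventually_gt_atTop 0)).exists
  let Ps : E →ₗ[ℝ] (Fin (Module.finrank ℂ (ℂ ⊗[ℝ] E)) → ℂ) :=
    ((e : _ →ₗ[ℂ] (Fin (Module.finrank ℂ (ℂ ⊗[ℝ] E)) → ℂ)) ∘ₗ S).restrictScalars ℝ ∘ₗ cxInc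
  let Pu : E →ₗ[ℝ] (Fin (Module.finrank ℂ (ℂ ⊗[ℝ] E)) → ℂ) :=
    ((e : _ →ₗ[ℂ] (Fin (Module.finrank ℂ (ℂ ⊗[ℝ] E)) → ℂ)) ∘ₗ U).restrictScalars ℝ ∘ₗ cxInc
  have hPs : ∀ x, Ps x = e (S (cxInc x)) := fun x => rfl
  have hPu : ∀ x, Pu x = e (U (cxInc x)) := fun x => rfl
  have hpc : ∀ (s : Set ℂ) (n : ℕ) x, Submodule.projection _ _ (eigSum_isCompl a s) ((a ^ n) x) =
      (a ^ n) (Submodule.projection _ _ (eigSum_isCompl a s) x) := by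
    intro s n x
    induction n with
    | zero => simp
    | succ n ih => rw [pow_succ', Module.End.mul_apply, Module.End.mul_apply, proj_comm, ih]
  obtain ⟨K, hK, hKa⟩ := LinearMap.exists_antilipschitzWith (c.prod (Ps.prod Pu)) (by
    rw [LinearMap.ker_eq_bot']
    intro x hx
    have hx1 : c x = 0 := congrArg Prod.fst hx
    have hx2 : e (S (cxInc x)) = 0 := congrArg (fun z => z.2.1) hx
    have hx3 : e (U (cxInc x)) = 0 := congrArg (fun z => z.2.2) hx
    exact hinj x hx1 (by simpa using hx2) (by simpa using hx3))
  refine ⟨N, hN, LinearMap.toContinuousLinearMap c, _, LinearMap.toContinuousLinearMap Ps,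
    LinearMap.toContinuousLinearMap Pu, K, hK, hcA, hcv, fun x hx => ?_, fun x => ?_, fun x => ?_⟩
  · simp only [LinearMap.coe_toContinuousLinearMap'] at hx ⊢
    have h1 := hKa.le_mul_dist x 0
    rw [map_zero, dist_zero_right, dist_zero_right] at h1
    refine h1.trans ?_
    gcongr
    have h2 : (c.prod (Ps.prod Pu)) x = (c x, Ps x, Pu x) := rfl
    rw [h2]
    simp only [Prod.norm_def, hx, norm_zero]
    exact max_le (by positivity) (max_le_add_of_nonneg (norm_nonneg _) (norm_nonneg _))
  · simp only [LinearMap.coe_toContinuousLinearMap', hPs]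
    rw [← cxEnd_pow_inc, hS, hpc]
    exact hN1 _ (Submodule.projection_apply_mem _ _)
  · simp only [LinearMap.coe_toContinuousLinearMap', hPu]
    rw [← cxEnd_pow_inc, hU, hpc]
    have h1 : (a ^ N) (Submodule.projection _ _ (eigSum_isCompl a u) (cxInc x)) ∈ eigSum a u := by
      rw [← hpc]; exact Submodule.projection_apply_mem _ _
    have h2 := hN2 _ h1
    have h3 : ∀ z, (b ^ N) ((a ^ N) z) = z := by
      intro z
      have hcomm : Commute b a := hba.trans hab.symm
      rw [← Module.End.mul_apply, ← hcomm.mul_pow, hba, one_pow, Module.End.one_apply]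
    rw [h3] at h2
    exact h2
end Cx

section Final
variable {E : Type*} [NormedAddCommGroup E] [NormedSpace ℝ E] [FiniteDimensional ℝ E]

lemma HypPeriodic.data (X : E → E) (φ : ℝ → E → E) (hX : ContDiff ℝ 1 X)
    (hflow : IsFlow φ) (hgen : GeneratedBy X φ) (p : E) (hp : HypPeriodic X φ p) :
    HypData φ p (X p) := by
  obtain ⟨hXp, T, hT, hTp, hsp, hfin⟩ := hp
  have hdiff : DifferentiableAt ℝ (φ T) p := by
    by_contra hnd
    rw [fderiv_zero_of_not_differentiableAt hnd] at hfin
    have h0 : cxEnd (0 : E →L[ℝ] E) = 0 := by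
      simp only [cxEnd]; exact LinearMap.baseChange_zero
    rw [h0] at hfin
    have hbot : Module.End.maxGenEigenspace (0 : Module.End ℂ (ℂ ⊗[ℝ] E)) 1 = ⊥ := by
      rw [eq_bot_iff]
      intro x hx
      rw [Module.End.mem_maxGenEigenspace] at hx
      obtain ⟨k, hk⟩ := hx
      rw [one_smul, zero_sub] at hk
      rcases neg_one_pow_eq_or (Module.End ℂ (ℂ ⊗[ℝ] E)) k with h | h <;> rw [h] at hk <;>
        simpa using hk
    rw [hbot, finrank_bot] at hfin
    exact zero_ne_one hfin
  have hA := hdiff.hasFDerivAt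
  set A := fderiv ℝ (φ T) p
  have hAinj := flow_deriv_inj X φ hX hflow hgen p hT hTp A hA
  have hAstr := flow_strict X φ hX hflow hgen p hT A hA
  let A' : E ≃L[ℝ] E := (LinearEquiv.ofInjectiveEndo (A : E →ₗ[ℝ] E) hAinj).toContinuousLinearEquiv
  have hA' : (A' : E →L[ℝ] E) = A := by ext x; rfl
  have hAv : A (X p) = X p := by
    have h1 := hgen.2.2 p 0
    rw [hgen.1] at h1
    have hA2 : HasFDerivAt (φ T) A (φ 0 p) := by rw [hgen.1]; exact hA
    have h2 := hA2.comp_hasDerivAt (0 : ℝ) h1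
    have h3 : (φ T ∘ fun s => φ s p) = fun s => φ s p := by
      funext s
      simp only [Function.comp]
      rw [← hflow.2.2, add_comm, hflow.2.2, hTp]
    rw [h3] at h2
    exact h2.unique h1
  obtain ⟨N, hN, c, d, Ps, Pu, κ, hκ, hc, hcv, hn, hs, hu⟩ :=
    hyp_linear A' (X p) hXp hAv (by rw [hA']; exact hsp) (by rw [hA']; exact hfin)
  rw [hA'] at hs hu
  have hiter : ∀ n : ℕ, (φ T)^[n] = φ (n * T) := by
    intro n
    induction n with
    | zero => funext x; simp [hflow.2.1]
    | succ n ih =>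
      funext x
      have : ((n + 1 : ℕ) : ℝ) * T = n * T + T := by push_cast; ring
      rw [Function.iterate_succ_apply, ih, this, hflow.2.2]
  have hBinj : Function.Injective (A ^ N) := by
    have : ∀ n : ℕ, Function.Injective (A ^ n) := by
      intro n
      induction n with
      | zero => exact fun x y h => h
      | succ n ih =>
        rw [pow_succ]
        exact ih.comp hAinj
    exact this N
  let B : E ≃L[ℝ] E :=
    (LinearEquiv.ofInjectiveEndo ((A ^ N : E →L[ℝ] E) : E →ₗ[ℝ] E) hBinj).toContinuousLinearEquiv
  have hB : (B : E →L[ℝ] E) = A ^ N := by ext x; rfl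
  have hBx : ∀ x, B x = (A ^ N) x := fun x => rfl
  refine ⟨N * T, by positivity, ?_, B, ?_, c, d, Ps, Pu, κ, hκ, ?_, hcv, hn, ?_, ?_⟩
  · rw [← hiter]; exact Function.iterate_fixed hTp N
  · rw [hB, ← hiter]; exact hAstr.iterate hTp N
  · intro x
    rw [hBx]
    have : ∀ n : ℕ, c ((A ^ n) x) = c x := by
      intro n
      induction n with
      | zero => rfl
      | succ n ih => rw [pow_succ', ← ih]; exact hc _
    exact this N
  · exact hs
  · exact hu

lemma limit_shadow (φ : ℝ → E → E) (hflow : IsFlow φ) (Λ : Set E) (hΛc : IsCompact Λ)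
    (hΛi : InvariantSet φ Λ) (hspec : WeakSpec φ Λ) (p q : E) (hpΛ : p ∈ Λ) (hqΛ : q ∈ Λ)
    {ε : ℝ} (hε : 0 < ε) :
    ∃ K : ℝ, ∃ z, (∀ t, 0 ≤ t → dist (φ (-t) z) (φ (-t) p) ≤ ε) ∧
      ∀ t, 0 ≤ t → dist (φ t (φ K z)) (φ t q) ≤ ε := by
  obtain ⟨K, hK, hsc⟩ := hspec ε hε
  have h1 : ∀ n : ℕ, ∃ z ∈ Λ, (∀ t ∈ Set.Icc (-(n : ℝ)) 0, dist (φ t z) (φ t p) < ε) ∧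
      (∀ t ∈ Set.Icc K (K + n), dist (φ t z) (φ (t - K) q) < ε) := by
    intro n
    obtain ⟨z, hz, h2, h3⟩ := hsc (-(n : ℝ)) 0 K (K + n) (by simp) (by simp) (by simp)
      (φ (-(n : ℝ)) p) (hΛi _ _ hpΛ) q hqΛ
    refine ⟨z, hz, fun t ht => ?_, h3⟩
    have := h2 t ht
    rw [← hflow.2.2] at this
    simpa using this
  choose z hzΛ hz1 hz2 using h1
  obtain ⟨z0, _, k, hk, hlim⟩ := hΛc.tendsto_subseq hzΛ
  have hc : ∀ t, Continuous (φ t) := fun t => hflow.1.comp (continuous_const.prodMk continuous_id)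
  have hkt := hk.tendsto_atTop
  refine ⟨K, z0, fun t ht => ?_, fun t ht => ?_⟩
  · have h2 := (((hc (-t)).tendsto z0).comp hlim).dist (tendsto_const_nhds (x := φ (-t) p))
    refine le_of_tendsto h2 ?_
    filter_upwards [(tendsto_natCast_atTop_atTop.comp hkt).eventually_ge_atTop t] with n hn
    exact (hz1 (k n) (-t) ⟨neg_le_neg hn, by linarith⟩).le
  · rw [← hflow.2.2]
    have h2 := (((hc (t + K)).tendsto z0).comp hlim).dist (tendsto_const_nhds (x := φ t q))
    refine le_of_tendsto h2 ?_
    filter_upwards [(tendsto_natCast_atTop_atTop.comp hkt).eventually_ge_atTop t] with n hn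
    have h3 := hz2 (k n) (t + K) ⟨by linarith, by simp only [Function.comp] at hn; linarith⟩
    rw [add_sub_cancel_right] at h3
    exact h3.le
end Final

/-- If a compact invariant set `Λ` has the weak specification property and
contains two distinct hyperbolic periodic orbits `O(p)` and `O(q)`, then
`W^u(O(p)) ∩ W^s(O(q)) ≠ ∅`. -/
theorem unstable_meets_stable_of_periodic_orbits
    {E : Type*} [NormedAddCommGroup E] [NormedSpace ℝ E] [FiniteDimensional ℝ E]
    (X : E → E) (φ : ℝ → E → E) (hX : ContDiff ℝ 1 X)
    (hflow : IsFlow φ) (hgen : GeneratedBy X φ)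
    (Λ : Set E) (hΛc : IsCompact Λ) (hΛi : InvariantSet φ Λ) (hspec : WeakSpec φ Λ)
    (p q : E) (hpΛ : p ∈ Λ) (hqΛ : q ∈ Λ)
    (hp : HypPeriodic X φ p) (hq : HypPeriodic X φ q)
    (hdist : orbitOf φ p ≠ orbitOf φ q) :
    (WuOrb φ p ∩ WsOrb φ q).Nonempty := by
  obtain ⟨ε₁, hε₁, h₁⟩ := stable_of_shadow X φ hX.continuous hflow hgen q
    (hq.data X φ hX hflow hgen q)
  obtain ⟨ε₂, hε₂, h₂⟩ := stable_of_shadow (fun x => - X x) (fun t x => φ (-t) x)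
    hX.continuous.neg (rev_flow φ hflow) (rev_gen X φ hgen) p
    ((hp.data X φ hX hflow hgen p).rev hflow)
  obtain ⟨K, z, hz1, hz2⟩ := limit_shadow φ hflow Λ hΛc hΛi hspec p q hpΛ hqΛ (lt_min hε₁ hε₂)
  have hu := h₂ z fun t ht => (hz1 t ht).trans (min_le_right _ _)
  have hs := h₁ (φ K z) fun t ht => (hz2 t ht).trans (min_le_left _ _)
  refine ⟨z, ?_, ?_⟩
  · simp only [WsOrb, WuOrb, Set.mem_iUnion] at hu ⊢
    obtain ⟨s, hs⟩ := hu
    refine ⟨-s, ?_⟩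
    have hs' : Tendsto (fun t : ℝ => dist (φ (-t) z) (φ (-t) (φ (-s) p))) atTop (nhds 0) := hs
    have := hs'.comp tendsto_neg_atBot_atTop
    simp only [Function.comp_def, neg_neg] at this
    exact this
  · simp only [WsOrb, Set.mem_iUnion] at hs ⊢
    obtain ⟨s, hs⟩ := hs
    refine ⟨s - K, ?_⟩
    have hs' : Tendsto (fun t : ℝ => dist (φ t (φ K z)) (φ t (φ s q))) atTop (nhds 0) := hs
    have := hs'.comp (tendsto_atTop_add_const_right atTop (-K) tendsto_id)
    refine this.congr fun t => ?_
    simp only [Function.comp, id, ← hflow.2.2]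
    congr 2 <;> ring
end

section
/- Let Λ be a compact invariant set with the weak specification property for a flow, and let σ and σ' be two distinct hyperbolic singularities in Λ. Then W^u(σ) ∩ W^s(σ') ≠ ∅. -/
open Filter Set Metric TensorProduct

universe u

theorem lyap_aux (n : ℕ) : ∀ (V : Type u) [NormedAddCommGroup V] [NormedSpace ℂ V]
    [FiniteDimensional ℂ V] (A : Module.End ℂ V), Module.finrank ℂ V = n →
    (∀ μ : ℂ, A.HasEigenvalue μ → μ.re ≠ 0) →
    ∃ B : V →L[ℝ] V →L[ℝ] ℝ, (∀ x y, B x y = B y x) ∧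
      ∃ c : ℝ, 0 < c ∧ ∀ x, c * ‖x‖ ^ 2 ≤ B (A x) x := by
  induction n with
  | zero =>
    intro V _ _ _ A h0 _
    have := Module.finrank_zero_iff.1 h0
    refine ⟨0, by simp, 1, one_pos, fun x => ?_⟩
    simp [Subsingleton.elim x 0]
  | succ n ih =>
    intro V _ _ _ A hn hA
    have : Nontrivial V := Module.nontrivial_of_finrank_pos (R := ℂ) (by omega)
    obtain ⟨l, hl⟩ := Module.End.exists_eigenvalue A
    have hlre := hA l hl
    obtain ⟨f, hf0, hf⟩ : ∃ f : V →ₗ[ℂ] ℂ, f ≠ 0 ∧ ∀ x, f (A x) = l * f x := by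
      have hlt : LinearMap.range (A - algebraMap ℂ (Module.End ℂ V) l) < ⊤ := by
        rw [lt_top_iff_ne_top]
        intro h
        have h1 : LinearMap.ker (A - algebraMap ℂ (Module.End ℂ V) l) = ⊥ :=
          LinearMap.ker_eq_bot_iff_range_eq_top.2 h
        apply hl
        rw [Module.End.genEigenspace_one] <;> simpa [Algebra.algebraMap_eq_smul_one] using h1
      obtain ⟨f, hf0, hf⟩ := Submodule.exists_le_ker_of_lt_top _ hlt
      refine ⟨f, hf0, fun x => ?_⟩
      have := hf (LinearMap.mem_range_self _ x)
      simpa [sub_eq_zero] using this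
    obtain ⟨v, hv⟩ : ∃ v, f v = 1 := LinearMap.surjective hf0 1
    have hinv : ∀ x ∈ LinearMap.ker f, A x ∈ LinearMap.ker f := by
      intro x hx
      rw [LinearMap.mem_ker] at *
      rw [hf, hx, mul_zero]
    have hfin : Module.finrank ℂ (LinearMap.ker f) = n := by
      have := Module.Dual.finrank_ker_add_one_of_ne_zero (f := f) hf0
      omega
    obtain ⟨B', hs', c, hc, hB'⟩ := ih (LinearMap.ker f) (A.restrict hinv) hfin (by
      intro μ hμ
      apply hA
      obtain ⟨x, hx⟩ := hμ.exists_hasEigenvector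
      refine Module.End.hasEigenvalue_of_hasEigenvector (x := (x : V))
        (Module.End.hasEigenvector_iff.2 ⟨Module.End.mem_eigenspace_iff.2 ?_, ?_⟩)
      · have := hx.apply_eq_smul
        simpa using congrArg Subtype.val this
      · simpa using hx.2)
    let P : V →ₗ[ℂ] LinearMap.ker f :=
      (LinearMap.id - f.smulRight v).codRestrict (LinearMap.ker f) (by
        intro x; simp [hv])
    have hP : ∀ x, ((P x : LinearMap.ker f) : V) = x - f x • v := fun x => rfl
    let w0 : LinearMap.ker f := ⟨A v - l • v, by simp [hf]⟩
    have hPA : ∀ x, P (A x) = A.restrict hinv (P x) + f x • w0 := by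
      intro x
      ext
      simp only [hP, Submodule.coe_add, LinearMap.coe_restrict_apply, map_sub, map_smul, hf,
        Submodule.coe_smul, w0]
      module
    let Pc : V →L[ℝ] LinearMap.ker f := (LinearMap.toContinuousLinearMap P).restrictScalars ℝ
    let fc : V →L[ℝ] ℂ := (LinearMap.toContinuousLinearMap f).restrictScalars ℝ
    have hPc : ∀ x, Pc x = P x := fun x => rfl
    have hfc : ∀ x, fc x = f x := fun x => rfl
    let r : V →L[ℝ] ℝ := Complex.reCLM.comp fc
    let i : V →L[ℝ] ℝ := Complex.imCLM.comp fc
    have hr : ∀ x, r x = (f x).re := fun x => rfl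
    have hi : ∀ x, i x = (f x).im := fun x => rfl
    set C : ℝ := ‖B'‖ * ‖w0‖ with hC
    let k : ℝ := (C ^ 2 / (2 * c) + c / 2 * ‖v‖ ^ 2) / l.re
    refine ⟨B'.bilinearComp Pc Pc + k • (r.smulRight r + i.smulRight i), ?_, c / 4,
      by positivity, ?_⟩
    · intro x y
      simp [hs' (Pc x), hr, hi]
      ring
    · intro x
      have e1 : (f (A x)).re * (f x).re + (f (A x)).im * (f x).im = l.re * ‖f x‖ ^ 2 := by
        rw [hf, ← Complex.normSq_eq_norm_sq, Complex.normSq_apply]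
        simp
        ring
      have e2 : (B'.bilinearComp Pc Pc + k • (r.smulRight r + i.smulRight i)) (A x) x =
          B' (A.restrict hinv (P x)) (P x) + B' (f x • w0) (P x)
            + (C ^ 2 / (2 * c) + c / 2 * ‖v‖ ^ 2) * ‖f x‖ ^ 2 := by
        have : k * (l.re * ‖f x‖ ^ 2) = (C ^ 2 / (2 * c) + c / 2 * ‖v‖ ^ 2) * ‖f x‖ ^ 2 := by
          rw [← mul_assoc, div_mul_cancel₀ _ hlre]
        rw [← this, ← e1]
        simp [hPc, hr, hi, hPA, mul_add]
      rw [e2]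
      have e3 := hB' (P x)
      have e4 : |B' (f x • w0) (P x)| ≤ C * ‖f x‖ * ‖P x‖ := by
        have := B'.le_opNorm₂ (f x • w0) (P x)
        rw [norm_smul, Real.norm_eq_abs] at this
        calc _ ≤ _ := this
          _ = _ := by rw [hC]; ring
      have e5 : ‖x‖ ≤ ‖P x‖ + ‖f x‖ * ‖v‖ := by
        have : x = (P x : V) + f x • v := by rw [hP]; simp
        calc ‖x‖ = ‖(P x : V) + f x • v‖ := by rw [← this]
          _ ≤ _ := (norm_add_le _ _).trans (by rw [norm_smul]; rfl)
      have e6 : ‖x‖ ^ 2 ≤ 2 * ‖P x‖ ^ 2 + 2 * (‖f x‖ * ‖v‖) ^ 2 := by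
        have := pow_le_pow_left₀ (norm_nonneg x) e5 2
        nlinarith [sq_nonneg (‖P x‖ - ‖f x‖ * ‖v‖)]
      have e7 : C * ‖f x‖ * ‖P x‖ ≤ c / 2 * ‖P x‖ ^ 2 + C ^ 2 / (2 * c) * ‖f x‖ ^ 2 := by
        have : c / 2 * ‖P x‖ ^ 2 + C ^ 2 / (2 * c) * ‖f x‖ ^ 2 - C * ‖f x‖ * ‖P x‖
          = (c * ‖P x‖ - C * ‖f x‖) ^ 2 / (2 * c) := by
          field_simp
          ring
        have h2 : 0 ≤ (c * ‖P x‖ - C * ‖f x‖) ^ 2 / (2 * c) := by positivity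
        linarith
      have e8 := (abs_le.1 e4).1
      have e9 := mul_le_mul_of_nonneg_left e6 (by positivity : 0 ≤ c / 4)
      nlinarith

theorem lyap_real {E : Type*} [NormedAddCommGroup E] [NormedSpace ℝ E] [FiniteDimensional ℝ E]
    (A : E →L[ℝ] E) (hA : ∀ μ ∈ spectrum ℂ (cxEnd A), μ.re ≠ 0) :
    ∃ B : E →L[ℝ] E →L[ℝ] ℝ, (∀ x y, B x y = B y x) ∧
      ∃ c : ℝ, 0 < c ∧ ∀ x, c * ‖x‖ ^ 2 ≤ B (A x) x := by
  let e := (Module.finBasis ℂ (ℂ ⊗[ℝ] E)).equivFun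
  obtain ⟨B, hs, c, hc, hB⟩ := lyap_aux _ _ (e.conj (cxEnd A)) rfl (by
    intro μ hμ
    apply hA
    rw [← Module.End.hasEigenvalue_iff_mem_spectrum]
    obtain ⟨x, hx⟩ := hμ.exists_hasEigenvector
    refine Module.End.hasEigenvalue_of_hasEigenvector (x := e.symm x)
      (Module.End.hasEigenvector_iff.2 ⟨Module.End.mem_eigenspace_iff.2 ?_, ?_⟩)
    · have := hx.apply_eq_smul
      rw [LinearEquiv.conj_apply_apply] at this
      rw [← map_smul, ← this, e.symm_apply_apply]
    · simpa using hx.2)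
  let j : E →ₗ[ℝ] (Fin (Module.finrank ℂ (ℂ ⊗[ℝ] E)) → ℂ) :=
    { toFun := fun x => e (1 ⊗ₜ x)
      map_add' := fun x y => by rw [TensorProduct.tmul_add, map_add]
      map_smul' := fun a x => by
        have : (1 : ℂ) ⊗ₜ[ℝ] (a • x) = (a : ℂ) • ((1 : ℂ) ⊗ₜ[ℝ] x) := by
          rw [← TensorProduct.smul_tmul, TensorProduct.smul_tmul']
          simp
        rw [this, map_smul]
        ext k
        simp }
  have hj : Function.Injective j := by
    intro x y hxy
    have h1 : (1 : ℂ) ⊗ₜ[ℝ] x = (1 : ℂ) ⊗ₜ[ℝ] y := e.injective hxy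
    exact Module.Flat.tensorProduct_mk_injective (R := ℝ) (S := ℂ) (M := E) h1
  have hjA : ∀ x, j (A x) = e.conj (cxEnd A) (j x) := by
    intro x
    rw [LinearEquiv.conj_apply_apply]
    change e _ = e (cxEnd A (e.symm (e _)))
    rw [e.symm_apply_apply]
    simp [cxEnd]
  let J := LinearMap.toContinuousLinearMap j
  have hJ : ∀ x, J x = j x := fun x => rfl
  obtain ⟨K, hK, hanti⟩ := LinearMap.exists_antilipschitzWith j (LinearMap.ker_eq_bot.2 hj)
  refine ⟨B.bilinearComp J J, fun x y => by simp [hs (J x)], c / K ^ 2, by positivity, fun x => ?_⟩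
  have h1 : ‖x‖ ≤ K * ‖j x‖ := by
    simpa using hanti.le_mul_norm_sub x 0
  have h2 := hB (j x)
  simp only [ContinuousLinearMap.bilinearComp_apply, hJ, hjA]
  refine le_trans ?_ h2
  have h3 := pow_le_pow_left₀ (norm_nonneg x) h1 2
  rw [div_mul_eq_mul_div, div_le_iff₀ (by positivity)]
  nlinarith

/-- Barbalat-type argument. -/
theorem tendsto_of_lyap {E : Type*} [NormedAddCommGroup E] [NormedSpace ℝ E]
    [FiniteDimensional ℝ E] (Y : E → E) (hY : Continuous Y) (σ : E)
    (B : E →L[ℝ] E →L[ℝ] ℝ) (hs : ∀ x y, B x y = B y x) (c ε : ℝ) (hc : 0 < c)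
    (h : ∀ x ∈ closedBall σ ε, c * ‖x - σ‖ ^ 2 ≤ B (Y x) (x - σ))
    (u : ℝ → E) (hu : ∀ t, HasDerivAt u (Y (u t)) t) (hball : ∀ t, 0 ≤ t → u t ∈ closedBall σ ε) :
    Tendsto u atTop (nhds σ) := by
  obtain ⟨S, hS⟩ := (isCompact_closedBall σ ε).exists_bound_of_continuousOn hY.continuousOn
  set S' := max S 1 with hS'
  have hS0 : 0 < S' := lt_of_lt_of_le one_pos (le_max_right _ _)
  let W : ℝ → ℝ := fun t => B (u t - σ) (u t - σ)
  have hW : ∀ t, HasDerivAt W (2 * B (Y (u t)) (u t - σ)) t := by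
    intro t
    have h1 : HasDerivAt (fun t => u t - σ) (Y (u t)) t := (hu t).sub_const σ
    have h2 := (B.hasFDerivAt.comp_hasDerivAt t h1).clm_apply h1
    have h3 := hs (u t - σ) (Y (u t))
    have h4 : 2 * B (Y (u t)) (u t - σ) = B (Y (u t)) (u t - σ) + B (u t - σ) (Y (u t)) := by
      rw [h3]
      ring
    rw [h4]
    exact h2
  have hWc : Continuous W := continuous_iff_continuousAt.2 fun t => (hW t).continuousAt
  have hgrow : ∀ D : ℝ, ∀ a b : ℝ, 0 ≤ a → a ≤ b → 
      (∀ t ∈ Icc a b, D ≤ 2 * (c * ‖u t - σ‖ ^ 2)) → D * (b - a) ≤ W b - W a := by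
    intro D a b ha hab hD
    refine Convex.mul_sub_le_image_sub_of_le_deriv (convex_Icc a b) hWc.continuousOn
      (fun t _ => (hW t).differentiableAt.differentiableWithinAt) ?_ a (left_mem_Icc.2 hab) b
      (right_mem_Icc.2 hab) hab
    intro t ht
    have ht' := interior_subset ht
    rw [(hW t).deriv]
    have := h (u t) (hball t (ha.trans ht'.1))
    linarith [hD t ht']
  have hmono : MonotoneOn W (Ici 0) := by
    intro a ha b _ hab
    have := hgrow 0 a b ha hab (fun t _ => by positivity)
    linarith
  have hbdd : ∀ t, 0 ≤ t → W t ≤ ‖B‖ * ε * ε := by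
    intro t ht
    have h1 : ‖u t - σ‖ ≤ ε := by simpa [dist_eq_norm] using hball t ht
    have h2 := B.le_opNorm₂ (u t - σ) (u t - σ)
    refine (le_abs_self _).trans (h2.trans ?_)
    have : 0 ≤ ε := (norm_nonneg _).trans h1
    gcongr
  obtain ⟨L, hL⟩ : ∃ L, Tendsto W atTop (nhds L) := by
    have hm : Monotone (fun t => W (max t 0)) := fun a b hab =>
      hmono (mem_Ici.2 (le_max_right _ _)) (mem_Ici.2 (le_max_right _ _)) (max_le_max_right _ hab)
    refine ⟨_, (tendsto_atTop_ciSup hm ⟨‖B‖ * ε * ε, ?_⟩).congr' ?_⟩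
    · rintro _ ⟨t, rfl⟩
      exact hbdd _ (le_max_right _ _)
    · filter_upwards [eventually_ge_atTop 0] with t ht
      rw [max_eq_left ht]
  rw [Metric.tendsto_nhds]
  intro η hη
  set d := η / (2 * S') with hd
  have hd0 : 0 < d := by positivity
  have hlim : Tendsto (fun t => W (t + d) - W t) atTop (nhds 0) := by
    have := (hL.comp (tendsto_atTop_add_const_right atTop d tendsto_id)).sub hL
    simpa using this
  have hpos : 0 < 2 * (c * (η / 2) ^ 2) * d := by positivity
  filter_upwards [hlim.eventually (gt_mem_nhds hpos), eventually_ge_atTop 0] with t ht ht0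
  by_contra hcon
  rw [not_lt, dist_eq_norm] at hcon
  refine absurd ht (not_lt.2 ?_)
  have := hgrow (2 * (c * (η / 2) ^ 2)) t (t + d) ht0 (by linarith) ?_
  · simpa using this
  intro s hs
  have h1 : ‖u s - u t‖ ≤ S' * (s - t) := by
    refine norm_image_sub_le_of_norm_deriv_le_segment' (f' := fun s => Y (u s))
      (fun x _ => (hu x).hasDerivWithinAt) ?_ s (right_mem_Icc.2 hs.1)
    intro x hx
    exact (hS _ (hball x (ht0.trans hx.1))).trans (le_max_left _ _)
  have h2 : S' * (s - t) ≤ η / 2 := by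
    have : S' * d = η / 2 := by rw [hd]; field_simp
    rw [← this]
    have := hs.2
    gcongr
    linarith
  have h3 : ‖u t - σ‖ ≤ ‖u s - u t‖ + ‖u s - σ‖ := by
    rw [norm_sub_rev (u s) (u t)]
    exact norm_sub_le_norm_sub_add_norm_sub _ _ _
  have h4 : η / 2 ≤ ‖u s - σ‖ := by linarith
  gcongr

theorem hyp_local {E : Type*} [NormedAddCommGroup E] [NormedSpace ℝ E]
    [FiniteDimensional ℝ E] (X : E → E) (hX : ContDiff ℝ 1 X) (σ : E) (hσ : HypSing X σ) :
    ∃ B : E →L[ℝ] E →L[ℝ] ℝ, (∀ x y, B x y = B y x) ∧ ∃ c : ℝ, 0 < c ∧ ∃ ε : ℝ, 0 < ε ∧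
      ∀ x ∈ closedBall σ ε, c * ‖x - σ‖ ^ 2 ≤ B (X x) (x - σ) := by
  obtain ⟨B, hs, c, hc, hB⟩ := lyap_real (fderiv ℝ X σ) hσ.2
  refine ⟨B, hs, c / 2, by positivity, ?_⟩
  have hd := ((hX.differentiable one_ne_zero) σ).hasFDerivAt
  have hδ : 0 < c / (2 * (‖B‖ + 1)) := by positivity
  have := hd.isLittleO.def hδ
  obtain ⟨ε, hε, hball⟩ := Metric.nhds_basis_closedBall.eventually_iff.1 this
  refine ⟨ε, hε, fun x hx => ?_⟩
  have h1 := hball hx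
  rw [hσ.1, sub_zero] at h1
  set r := X x - fderiv ℝ X σ (x - σ) with hr
  have h2 : X x = fderiv ℝ X σ (x - σ) + r := by rw [hr]; abel
  rw [h2, map_add, add_apply]
  have h3 := hB (x - σ)
  have h4 : |B r (x - σ)| ≤ c / 2 * ‖x - σ‖ ^ 2 := by
    calc |B r (x - σ)| ≤ ‖B‖ * ‖r‖ * ‖x - σ‖ := B.le_opNorm₂ _ _
      _ ≤ (‖B‖ + 1) * (c / (2 * (‖B‖ + 1)) * ‖x - σ‖) * ‖x - σ‖ := by
        gcongr
        linarith
      _ = _ := by field_simp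
  have h5 := (abs_le.1 h4).1
  linarith

theorem sing_fixed {E : Type*} [NormedAddCommGroup E] [NormedSpace ℝ E]
    (X : E → E) (hX : ContDiff ℝ 1 X) (φ : ℝ → E → E) (hgen : GeneratedBy X φ) (σ : E)
    (hσ : X σ = 0) (t : ℝ) : φ t σ = σ := by
  have hc : Continuous fun t => φ t σ :=
    continuous_iff_continuousAt.2 fun t => (hgen.2.2 σ t).continuousAt
  have hclo : IsClosed {t | φ t σ = σ} := isClosed_eq hc continuous_const
  have hop : IsOpen {t | φ t σ = σ} := by
    rw [isOpen_iff_mem_nhds]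
    intro t₀ ht₀
    obtain ⟨K, s, hs, hK⟩ :=
      ((hX.contDiffAt (x := σ)).hasStrictFDerivAt one_ne_zero).exists_lipschitzOnWith
    refine ODE_solution_unique_of_eventually (v := fun _ => X) (s := fun _ => s) (K := K)
      (f := fun t => φ t σ) (g := fun _ => σ) (Eventually.of_forall fun _ => hK) ?_ ?_ ht₀
    · have : ∀ᶠ t in nhds t₀, φ t σ ∈ s := by
        apply hc.continuousAt
        change s ∈ nhds (φ t₀ σ)
        have h0 : φ t₀ σ = σ := ht₀
        rwa [h0]
      filter_upwards [this] with t ht using ⟨hgen.2.2 σ t, ht⟩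
    · refine Eventually.of_forall fun t => ⟨?_, mem_of_mem_nhds hs⟩
      simpa [hσ] using hasDerivAt_const t σ
  have := (IsClopen.eq_univ ⟨hclo, hop⟩ ⟨0, hgen.1 σ⟩)
  have ht : t ∈ {t | φ t σ = σ} := by rw [this]; exact mem_univ t
  exact ht

/-- If a compact invariant set `Λ` has the weak specification property and
contains two distinct hyperbolic singularities `σ` and `σ'`, then
`W^u(σ) ∩ W^s(σ') ≠ ∅`. -/
theorem unstable_meets_stable_of_singularities
    {E : Type*} [NormedAddCommGroup E] [NormedSpace ℝ E] [FiniteDimensional ℝ E]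
    (X : E → E) (φ : ℝ → E → E) (hX : ContDiff ℝ 1 X)
    (hflow : IsFlow φ) (hgen : GeneratedBy X φ)
    (Λ : Set E) (hΛc : IsCompact Λ) (hΛi : InvariantSet φ Λ) (hspec : WeakSpec φ Λ)
    (σ σ' : E) (hσΛ : σ ∈ Λ) (hσ'Λ : σ' ∈ Λ)
    (hσ : HypSing X σ) (hσ' : HypSing X σ') (hne : σ ≠ σ') :
    (WuPoint φ σ ∩ WsPoint φ σ').Nonempty := by
  obtain ⟨B, hs, c, hc, ε, hε, hB⟩ := hyp_local X hX σ hσ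
  obtain ⟨B', hs', c', hc', ε', hε', hB'⟩ := hyp_local X hX σ' hσ'
  obtain ⟨K, hK, hspc⟩ := hspec (min ε ε') (lt_min hε hε')
  have hfix := sing_fixed X hX φ hgen σ hσ.1
  have hfix' := sing_fixed X hX φ hgen σ' hσ'.1
  have hz : ∀ n : ℕ, ∃ z ∈ Λ, (∀ t ∈ Icc (-(n : ℝ)) 0, dist (φ t z) σ < min ε ε') ∧
      (∀ t ∈ Icc K (K + n), dist (φ t z) σ' < min ε ε') := by
    intro n
    obtain ⟨z, hz, h1, h2⟩ := hspc (-(n : ℝ)) 0 K (K + n) (by simp) (by simp) (by simp)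
      σ hσΛ σ' hσ'Λ
    simp only [hfix, hfix'] at h1 h2
    exact ⟨z, hz, h1, h2⟩
  choose z hzΛ hz1 hz2 using hz
  obtain ⟨w, -, ψ, hψ, hlim⟩ := hΛc.tendsto_subseq hzΛ
  have hcont : ∀ t, Tendsto (fun n => φ t (z (ψ n))) atTop (nhds (φ t w)) := fun t =>
    ((hflow.1.comp (Continuous.prodMk_right t)).tendsto w).comp hlim
  have hbig : ∀ t : ℝ, ∀ᶠ n in atTop, t ≤ (ψ n : ℝ) := fun t =>
    (tendsto_natCast_atTop_atTop.comp hψ.tendsto_atTop).eventually_ge_atTop t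
  have hw1 : ∀ t ≤ 0, φ t w ∈ closedBall σ ε := by
    intro t ht
    refine isClosed_closedBall.mem_of_tendsto (hcont t) ?_
    filter_upwards [hbig (-t)] with n hn
    exact ((hz1 _ t ⟨by linarith, ht⟩).trans_le (min_le_left _ _)).le
  have hw2 : ∀ t, K ≤ t → φ t w ∈ closedBall σ' ε' := by
    intro t ht
    refine isClosed_closedBall.mem_of_tendsto (hcont t) ?_
    filter_upwards [hbig (t - K)] with n hn
    exact ((hz2 _ t ⟨ht, by linarith⟩).trans_le (min_le_right _ _)).le
  refine ⟨w, ?_, ?_⟩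
  · have h1 : Tendsto (fun t => φ (-t) w) atTop (nhds σ) := by
      refine tendsto_of_lyap (fun x => - X x) hX.continuous.neg σ (-B) (fun x y => by simp [hs x])
        c ε hc (fun x hx => by simpa using hB x hx) _ (fun t => ?_)
        (fun t ht => hw1 _ (by linarith))
      simpa [Function.comp_def] using (hgen.2.2 w (-t)).scomp t (hasDerivAt_neg t)
    have h2 := h1.comp tendsto_neg_atBot_atTop
    change Tendsto (fun t => φ t w) atBot (nhds σ)
    simpa [Function.comp_def] using h2
  · have h1 : Tendsto (fun t => φ (t + K) w) atTop (nhds σ') := by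
      refine tendsto_of_lyap X hX.continuous σ' B' hs' c' ε' hc' hB' _ (fun t => ?_)
        (fun t ht => hw2 _ (by linarith))
      simpa using (hgen.2.2 w (t + K)).comp_add_const t K
    have h2 := h1.comp (tendsto_atTop_add_const_right atTop (-K) tendsto_id)
    change Tendsto (fun t => φ t w) atTop (nhds σ')
    simpa [Function.comp_def] using h2
end

section
/- Let Λ be a compact invariant set with the weak specification property for a flow, σ a hyperbolic singularity in Λ and O(q) a hyperbolic periodic orbit in Λ. Then W^u(σ) ∩ W^s(O(q)) ≠ ∅. -/
open Filter Set Metric TensorProduct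

open Polynomial in
/-- precomposition with `B` on complex valued functionals -/
noncomputable def dualOp {E : Type*} [NormedAddCommGroup E] [NormedSpace ℝ E]
    (B : E →L[ℝ] E) : (E →L[ℝ] ℂ) →ₗ[ℂ] (E →L[ℝ] ℂ) where
  toFun l := l.comp B
  map_add' := by intros; ext; simp
  map_smul' := by intros; ext; simp

open Polynomial in
theorem dualOp_aeval {E : Type*} [NormedAddCommGroup E] [NormedSpace ℝ E]
    (B : E →L[ℝ] E) (p : ℝ[X]) (l : E →L[ℝ] ℂ) (y : E) :
    (aeval (dualOp B) (p.map (algebraMap ℝ ℂ)) l) y = l (aeval (B : E →ₗ[ℝ] E) p y) := by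
  induction p using Polynomial.induction_on' generalizing l with
  | add p q hp hq =>
    rw [Polynomial.map_add, map_add, map_add]
    simp only [LinearMap.add_apply, add_apply, hp, hq, map_add]
  | monomial n a =>
    simp only [Polynomial.map_monomial, aeval_monomial]
    have : ∀ n (l : E →L[ℝ] ℂ) y, ((dualOp B ^ n) l) y = l (((B : E →ₗ[ℝ] E) ^ n) y) := by
      intro n
      induction n with
      | zero => intros; simp
      | succ n ih =>
        intro l y
        rw [pow_succ, pow_succ', Module.End.mul_apply, ih]
        simp [dualOp]
    simp [Module.algebraMap_end_apply, this]

theorem scalar_discrete (μ : ℂ) (hμ : ‖μ‖ ≠ 1) (u h : ℕ → ℂ) (M : ℝ)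
    (hu : ∀ n, u (n+1) = μ * u n + h n) (hM : ∀ n, ‖u n‖ ≤ M) (N : ℕ) :
    ∑ n ∈ Finset.range N, ‖u n‖ ≤
      |‖μ‖ - 1|⁻¹ * (M + ∑ n ∈ Finset.range N, ‖h n‖) := by
  have h0 : 0 < |‖μ‖ - 1| := abs_pos.2 (sub_ne_zero.2 hμ)
  have hshift : ∑ n ∈ Finset.range N, ‖u (n+1)‖ + ‖u 0‖ = ∑ n ∈ Finset.range N, ‖u n‖ + ‖u N‖ := by
    rw [← Finset.sum_range_succ' (fun n => ‖u n‖), Finset.sum_range_succ]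
  have h1 : ∑ n ∈ Finset.range N, ‖u (n+1)‖ ≤ ‖μ‖ * ∑ n ∈ Finset.range N, ‖u n‖
      + ∑ n ∈ Finset.range N, ‖h n‖ := by
    rw [Finset.mul_sum, ← Finset.sum_add_distrib]
    refine Finset.sum_le_sum fun n _ => ?_
    rw [hu]; exact (norm_add_le _ _).trans (by rw [norm_mul])
  have h2 : ‖μ‖ * ∑ n ∈ Finset.range N, ‖u n‖ ≤ ∑ n ∈ Finset.range N, ‖u (n+1)‖
      + ∑ n ∈ Finset.range N, ‖h n‖ := by
    rw [Finset.mul_sum, ← Finset.sum_add_distrib]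
    refine Finset.sum_le_sum fun n _ => ?_
    have : μ * u n = u (n+1) - h n := by rw [hu]; ring
    rw [← norm_mul, this]; exact norm_sub_le _ _
  rw [inv_mul_eq_div, le_div_iff₀ h0]
  have := hM 0; have := hM N
  have := norm_nonneg (u 0); have := norm_nonneg (u N)
  rcases abs_cases (‖μ‖ - 1) with ⟨h, _⟩ | ⟨h, _⟩ <;> rw [h] <;> linarith

theorem scalar_cont (μ : ℂ) (hμ : μ.re ≠ 0) (u h : ℝ → ℂ) (M H : ℝ) (hH : 0 < H)
    (hu : ∀ t, HasDerivAt u (μ * u t + h t) t) (hM : ∀ t, 0 ≤ t → ‖u t‖ ≤ M)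
    (hh : ∀ᶠ t in atTop, ‖h t‖ ≤ H) :
    ∀ᶠ t in atTop, ‖u t‖ ≤ 2 * |μ.re|⁻¹ * H := by
  set a := μ.re with ha
  obtain ⟨t0, ht0⟩ := eventually_atTop.1 (hh.and (eventually_ge_atTop 0))
  have hM0 : 0 ≤ M := (norm_nonneg _).trans (hM 0 le_rfl)
  let v : ℝ → ℂ := fun s => Complex.exp (-μ * s) * u s
  have hnv : ∀ s, ‖v s‖ = Real.exp (-a * s) * ‖u s‖ := by
    intro s; simp [v, Complex.norm_exp, ha]
  have hv : ∀ s : ℝ, HasDerivAt v (Complex.exp (-μ * s) * h s) s := by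
    intro s
    have h1 : HasDerivAt (fun s : ℝ => Complex.exp (-μ * s)) (Complex.exp (-μ * s) * (-μ * 1)) s := by
      have : HasDerivAt (fun s : ℝ => -μ * (s:ℂ)) (-μ * 1) s :=
        (Complex.ofRealCLM.hasDerivAt (x := s)).const_mul (-μ)
      exact this.cexp
    refine (h1.mul (hu s)).congr_deriv ?_
    ring
  have key : ∀ t s, t0 ≤ t → t ≤ s →
      ‖v s - v t‖ ≤ (H / (-a)) * (Real.exp (-a * s) - Real.exp (-a * t)) := by
    intro t s ht hts
    have hB : ∀ x, HasDerivAt (fun x => (H / (-a)) * (Real.exp (-a * x) - Real.exp (-a * t)))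
        (H * Real.exp (-a * x)) x := by
      intro x
      have h1 : HasDerivAt (fun x : ℝ => -a * x) (-a * 1) x := (hasDerivAt_id x).const_mul (-a)
      refine ((h1.exp.sub_const (Real.exp (-a * t))).const_mul (H / (-a))).congr_deriv ?_
      have ha0 : a ≠ 0 := hμ
      field_simp
    refine image_norm_le_of_norm_deriv_right_le_deriv_boundary (a := t) (b := s)
      (f := fun s => v s - v t) (f' := fun s => Complex.exp (-μ * s) * h s)
      (fun x _ => ((hv x).sub_const _).continuousAt.continuousWithinAt)
      (fun x _ => ((hv x).sub_const _).hasDerivWithinAt) (by simp) hB ?_ ⟨hts, le_rfl⟩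
    intro x hx
    rw [norm_mul, Complex.norm_exp, mul_comm]
    have := (ht0 x (ht.trans hx.1)).1
    simp only [Complex.mul_re, Complex.neg_re, Complex.ofReal_re, Complex.ofReal_im, mul_zero, sub_zero]
    rw [← ha]
    gcongr
  rcases lt_or_gt_of_ne hμ with hneg | hpos
  · have hneg : a < 0 := hneg
    have e1 : ∀ᶠ t in atTop, Real.exp (a * (t - t0)) * M ≤ H / (-a) := by
      have : Tendsto (fun t => Real.exp (a * (t - t0)) * M) atTop (nhds (0 * M)) := by
        refine Tendsto.mul_const M (Real.tendsto_exp_atBot.comp ?_)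
        exact (tendsto_atTop_add_const_right _ (-t0) tendsto_id).const_mul_atTop_of_neg hneg
      rw [zero_mul] at this
      exact this.eventually_le_const (div_pos hH (by linarith))
    filter_upwards [e1, eventually_ge_atTop t0] with t h1 h2
    have h3 := key t0 t le_rfl h2
    have h4 : ‖v t‖ ≤ ‖v t0‖ + H / (-a) * Real.exp (-a * t) := by
      have : ‖v t‖ ≤ ‖v t0‖ + ‖v t - v t0‖ := by
        simpa using norm_add_le (v t0) (v t - v t0)
      have : 0 ≤ H / (-a) * Real.exp (-a * t0) := by
        have : 0 < H / (-a) := div_pos hH (by linarith)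
        positivity
      linarith
    rw [hnv, hnv] at h4
    have h5 := mul_le_mul_of_nonneg_left h4 (Real.exp_pos (a * t)).le
    have e2 : Real.exp (a*t) * Real.exp (-a * t) = 1 := by rw [← Real.exp_add]; simp
    have e3 : Real.exp (a*t) * Real.exp (-a * t0) = Real.exp (a * (t - t0)) := by
      rw [← Real.exp_add]; ring_nf
    have h6 : ‖u t‖ ≤ Real.exp (a * (t - t0)) * ‖u t0‖ + H / (-a) := by
      have q1 : Real.exp (a*t) * (Real.exp (-a * t) * ‖u t‖) = ‖u t‖ := by rw [← mul_assoc, e2, one_mul]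
      have q2 : Real.exp (a*t) * (Real.exp (-a * t0) * ‖u t0‖ + H / (-a) * Real.exp (-a * t)) =
        Real.exp (a*t) * Real.exp (-a * t0) * ‖u t0‖ + H / (-a) * (Real.exp (a*t) * Real.exp (-a * t)) := by ring
      rw [q1, q2, e2, e3] at h5; linarith
    have h7 : Real.exp (a * (t - t0)) * ‖u t0‖ ≤ Real.exp (a * (t - t0)) * M := by
      gcongr; exact hM _ (ht0 t0 le_rfl).2
    rw [abs_of_neg hneg]
    have : 2 * (-a)⁻¹ * H = H / (-a) + H / (-a) := by ring
    linarith
  · have hpos : 0 < a := hpos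
    filter_upwards [eventually_ge_atTop t0] with t ht
    have e1 : ∀ᶠ s in atTop, Real.exp (-a * (s - t)) * M ≤ H / a := by
      have : Tendsto (fun s => Real.exp (-a * (s - t)) * M) atTop (nhds (0 * M)) := by
        refine Tendsto.mul_const M (Real.tendsto_exp_atBot.comp ?_)
        exact (tendsto_atTop_add_const_right _ (-t) tendsto_id).const_mul_atTop_of_neg (by linarith)
      rw [zero_mul] at this
      exact this.eventually_le_const (div_pos hH hpos)
    obtain ⟨s, h1, hs⟩ := (e1.and (eventually_ge_atTop t)).exists
    have h3 := key t s ht hs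
    have h4 : ‖v t‖ ≤ ‖v s‖ + H / a * Real.exp (-a * t) := by
      have : ‖v t‖ ≤ ‖v s‖ + ‖v s - v t‖ := by
        simpa using norm_sub_le (v s) (v s - v t)
      have : 0 ≤ H / a * Real.exp (-a * s) := by positivity
      rw [div_neg] at h3
      linarith
    rw [hnv, hnv] at h4
    have h5 := mul_le_mul_of_nonneg_left h4 (Real.exp_pos (a * t)).le
    have e2 : Real.exp (a*t) * Real.exp (-a * t) = 1 := by rw [← Real.exp_add]; simp
    have e3 : Real.exp (a*t) * Real.exp (-a * s) = Real.exp (-a * (s - t)) := by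
      rw [← Real.exp_add]; ring_nf
    have h6 : ‖u t‖ ≤ Real.exp (-a * (s - t)) * ‖u s‖ + H / a := by
      have q1 : Real.exp (a*t) * (Real.exp (-a * t) * ‖u t‖) = ‖u t‖ := by rw [← mul_assoc, e2, one_mul]
      have q2 : Real.exp (a*t) * (Real.exp (-a * s) * ‖u s‖ + H / a * Real.exp (-a * t)) =
        Real.exp (a*t) * Real.exp (-a * s) * ‖u s‖ + H / a * (Real.exp (a*t) * Real.exp (-a * t)) := by ring
      rw [q1, q2, e2, e3] at h5; linarith
    have h7 : Real.exp (-a * (s - t)) * ‖u s‖ ≤ Real.exp (-a * (s - t)) * M := by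
      gcongr; exact hM _ ((ht0 t ht).2.trans hs)
    rw [abs_of_pos hpos]
    have : 2 * a⁻¹ * H = H / a + H / a := by ring
    linarith

open Polynomial in
theorem discrete_aux {E : Type*} [NormedAddCommGroup E] [NormedSpace ℝ E]
    (B : E →L[ℝ] E) (s : Multiset ℂ) (hs : ∀ μ ∈ s, ‖μ‖ ≠ 1) :
    ∀ l : E →L[ℝ] ℂ, ∃ C : ℝ, 0 ≤ C ∧ ∀ (y : ℕ → E) (M : ℝ) (N : ℕ),
      (∀ n, (aeval (dualOp B) (s.map (fun μ => X - Polynomial.C μ)).prod l) (y n) = 0) →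
      (∀ n, ‖y n‖ ≤ M) →
      ∑ n ∈ Finset.range N, ‖l (y n)‖ ≤
        C * (M + ∑ n ∈ Finset.range N, ‖y (n+1) - B (y n)‖) := by
  induction s using Multiset.induction_on with
  | empty =>
    intro l
    refine ⟨0, le_rfl, fun y M N h _ => ?_⟩
    simp only [Multiset.map_zero, Multiset.prod_zero, map_one, Module.End.one_apply] at h
    simp [h]
  | cons μ s ih =>
    intro l
    set l' : E →L[ℝ] ℂ := dualOp B l - μ • l with hl'
    obtain ⟨C', hC', H'⟩ := ih (fun ν hν => hs ν (Multiset.mem_cons_of_mem hν)) l'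
    have hμ := hs μ (Multiset.mem_cons_self μ s)
    refine ⟨|‖μ‖ - 1|⁻¹ * (‖l‖ + C' + ‖l‖), by positivity, fun y M N h hM => ?_⟩
    have h1 := H' y M N (fun n => by
      have := h n
      rw [Multiset.map_cons, Multiset.prod_cons, mul_comm, map_mul, Module.End.mul_apply] at this
      simpa [hl'] using this) hM
    have hM0 : 0 ≤ M := (norm_nonneg _).trans (hM 0)
    have h2 := scalar_discrete μ hμ (fun n => l (y n))
      (fun n => l' (y n) + l (y (n+1) - B (y n))) (‖l‖ * M) (by
        intro n; simp [hl', dualOp]) (fun n => (l.le_opNorm _).trans (by gcongr; exact hM n)) N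
    refine h2.trans ?_
    rw [mul_assoc]
    gcongr
    have h3 : ∑ n ∈ Finset.range N, ‖l' (y n) + l (y (n+1) - B (y n))‖ ≤
        ∑ n ∈ Finset.range N, ‖l' (y n)‖ + ‖l‖ * ∑ n ∈ Finset.range N, ‖y (n+1) - B (y n)‖ := by
      rw [Finset.mul_sum, ← Finset.sum_add_distrib]
      exact Finset.sum_le_sum fun n _ => (norm_add_le _ _).trans (by gcongr; exact l.le_opNorm _)
    have h4 : 0 ≤ ∑ n ∈ Finset.range N, ‖y (n+1) - B (y n)‖ := by positivity
    have h5 : 0 ≤ ‖l‖ * M := by positivity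
    have h6 : 0 ≤ ‖l‖ * ∑ n ∈ Finset.range N, ‖y (n+1) - B (y n)‖ := by positivity
    nlinarith

open Polynomial in
theorem cont_aux {E : Type*} [NormedAddCommGroup E] [NormedSpace ℝ E]
    (A : E →L[ℝ] E) (s : Multiset ℂ) (hs : ∀ μ ∈ s, μ.re ≠ 0) :
    ∀ l : E →L[ℝ] ℂ, ∃ C : ℝ, 0 < C ∧ ∀ (y g : ℝ → E) (M G : ℝ),
      (∀ t, (aeval (dualOp A) (s.map (fun μ => X - Polynomial.C μ)).prod l) (y t) = 0) →
      (∀ t, HasDerivAt y (-(A (y t) + g t)) t) →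
      (∀ t, 0 ≤ t → ‖y t‖ ≤ M) → 0 < G → (∀ᶠ t in atTop, ‖g t‖ ≤ G) →
      ∀ᶠ t in atTop, ‖l (y t)‖ ≤ C * G := by
  induction s using Multiset.induction_on with
  | empty =>
    intro l
    refine ⟨1, one_pos, fun y g M G h _ _ hG _ => ?_⟩
    simp only [Multiset.map_zero, Multiset.prod_zero, map_one, Module.End.one_apply] at h
    simp [h, hG.le]
  | cons μ s ih =>
    intro l
    set l' : E →L[ℝ] ℂ := dualOp A l - μ • l with hl'
    obtain ⟨C', hC', H'⟩ := ih (fun ν hν => hs ν (Multiset.mem_cons_of_mem hν)) l'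
    have hμ := hs μ (Multiset.mem_cons_self μ s)
    have hμ' : 0 < |μ.re| := abs_pos.2 hμ
    refine ⟨2 * |μ.re|⁻¹ * (C' + ‖l‖), by positivity, fun y g M G h hy hM hG hg => ?_⟩
    have h1 := H' y g M G (fun n => by
      have := h n
      rw [Multiset.map_cons, Multiset.prod_cons, mul_comm, map_mul, Module.End.mul_apply] at this
      simpa [hl'] using this) hy hM hG hg
    have h2 := scalar_cont (-μ) (by simpa using hμ) (fun t => l (y t))
      (fun t => -(l' (y t) + l (g t))) (‖l‖ * M) ((C' + ‖l‖) * G) (by positivity)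
      (by
        intro t
        refine (l.hasFDerivAt.comp_hasDerivAt t (hy t)).congr_deriv ?_
        simp [hl', dualOp]; ring)
      (fun t ht => (l.le_opNorm _).trans (by gcongr; exact hM t ht))
      (by
        filter_upwards [h1, hg] with t h1 hg
        rw [norm_neg, add_mul]
        refine (norm_add_le _ _).trans (add_le_add h1 ((l.le_opNorm _).trans (by gcongr))))
    filter_upwards [h2] with t h2
    simpa [mul_assoc] using h2

/-- finitely many complex functionals control the norm -/
theorem norm_le_functionals (E : Type*) [NormedAddCommGroup E] [NormedSpace ℝ E]
    [FiniteDimensional ℝ E] : ∃ (d : ℕ) (l : Fin d → (E →L[ℝ] ℂ)) (c : Fin d → ℝ),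
    (∀ i, 0 ≤ c i) ∧ ∀ y, ‖y‖ ≤ ∑ i, c i * ‖l i y‖ := by
  let b := Module.finBasis ℝ E
  refine ⟨Module.finrank ℝ E, fun i => Complex.ofRealCLM.comp (LinearMap.toContinuousLinearMap (b.coord i)),
    fun i => ‖b i‖, fun i => norm_nonneg _, fun y => ?_⟩
  conv_lhs => rw [← b.sum_repr y]
  refine (norm_sum_le _ _).trans (Finset.sum_le_sum fun i _ => ?_)
  rw [norm_smul, mul_comm]
  simp

open Polynomial in
theorem discrete_main {E : Type*} [NormedAddCommGroup E] [NormedSpace ℝ E] [FiniteDimensional ℝ E]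
    (B : E →L[ℝ] E) (p : ℝ[X]) (hp : p.Monic)
    (hs : ∀ μ : ℂ, (p.map (algebraMap ℝ ℂ)).IsRoot μ → ‖μ‖ ≠ 1) :
    ∃ C : ℝ, 0 ≤ C ∧ ∀ (y : ℕ → E) (M : ℝ) (N : ℕ),
      (∀ n, aeval (B : E →ₗ[ℝ] E) p (y n) = 0) →
      (∀ n, ‖y n‖ ≤ M) →
      ∑ n ∈ Finset.range N, ‖y n‖ ≤
        C * (M + ∑ n ∈ Finset.range N, ‖y (n+1) - B (y n)‖) := by
  obtain ⟨d, l, c, hc, hl⟩ := norm_le_functionals E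
  have hm : (p.map (algebraMap ℝ ℂ)).Monic := hp.map _
  have hprod := (IsAlgClosed.splits (p.map (algebraMap ℝ ℂ))).eq_prod_roots_of_monic hm
  choose C hC H using discrete_aux B (p.map (algebraMap ℝ ℂ)).roots
    (fun μ hμ => hs μ (isRoot_of_mem_roots hμ))
  refine ⟨∑ i, c i * C (l i), Finset.sum_nonneg fun i _ => mul_nonneg (hc i) (hC _), fun y M N h hM => ?_⟩
  calc ∑ n ∈ Finset.range N, ‖y n‖ ≤ ∑ n ∈ Finset.range N, ∑ i, c i * ‖l i (y n)‖ :=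
        Finset.sum_le_sum fun n _ => hl _
    _ = ∑ i, c i * ∑ n ∈ Finset.range N, ‖l i (y n)‖ := by
        rw [Finset.sum_comm]; simp_rw [Finset.mul_sum]
    _ ≤ ∑ i, c i * (C (l i) * (M + ∑ n ∈ Finset.range N, ‖y (n+1) - B (y n)‖)) := by
        refine Finset.sum_le_sum fun i _ => mul_le_mul_of_nonneg_left (H (l i) y M N (fun n => ?_) hM) (hc i)
        rw [← hprod, dualOp_aeval, h n, map_zero]
    _ = _ := by rw [Finset.sum_mul]; simp_rw [mul_assoc]

open Polynomial in
theorem cont_main {E : Type*} [NormedAddCommGroup E] [NormedSpace ℝ E] [FiniteDimensional ℝ E]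
    (A : E →L[ℝ] E) (hs : ∀ μ ∈ spectrum ℂ (cxEnd A), μ.re ≠ 0) :
    ∃ C : ℝ, 0 < C ∧ ∀ (y g : ℝ → E) (M G : ℝ),
      (∀ t, HasDerivAt y (-(A (y t) + g t)) t) →
      (∀ t, 0 ≤ t → ‖y t‖ ≤ M) → 0 < G → (∀ᶠ t in atTop, ‖g t‖ ≤ G) →
      ∀ᶠ t in atTop, ‖y t‖ ≤ C * G := by
  obtain ⟨d, l, c, hc, hl⟩ := norm_le_functionals E
  set p := (A : E →ₗ[ℝ] E).charpoly with hp
  have hm : (p.map (algebraMap ℝ ℂ)).Monic := (LinearMap.charpoly_monic _).map _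
  have hprod := (IsAlgClosed.splits (p.map (algebraMap ℝ ℂ))).eq_prod_roots_of_monic hm
  have hcp : (cxEnd A).charpoly = p.map (algebraMap ℝ ℂ) := LinearMap.charpoly_baseChange ..
  choose C hC H using cont_aux A (p.map (algebraMap ℝ ℂ)).roots
    (fun μ hμ => hs μ (by
      rw [Module.End.mem_spectrum_iff_isRoot_charpoly, hcp]; exact isRoot_of_mem_roots hμ))
  refine ⟨∑ i, c i * C (l i) + 1, ?_, fun y g M G hy hM hG hg => ?_⟩
  · have : 0 ≤ ∑ i, c i * C (l i) := Finset.sum_nonneg fun i _ => mul_nonneg (hc i) (hC _).le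
    linarith
  have : ∀ i, ∀ᶠ t in atTop, ‖l i (y t)‖ ≤ C (l i) * G := fun i =>
    H (l i) y g M G (fun n => by
      rw [← hprod, dualOp_aeval, LinearMap.aeval_self_charpoly]; simp) hy hM hG hg
  filter_upwards [eventually_all.2 this] with t ht
  calc ‖y t‖ ≤ ∑ i, c i * ‖l i (y t)‖ := hl _
    _ ≤ ∑ i, c i * (C (l i) * G) := Finset.sum_le_sum fun i _ => mul_le_mul_of_nonneg_left (ht i) (hc i)
    _ = (∑ i, c i * C (l i)) * G := by rw [Finset.sum_mul]; simp_rw [mul_assoc]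
    _ ≤ _ := by nlinarith

open Polynomial in
theorem periodic_algebra {E : Type*} [NormedAddCommGroup E] [NormedSpace ℝ E] [FiniteDimensional ℝ E]
    (B : E →L[ℝ] E) (v : E) (hv : v ≠ 0) (hBv : B v = v)
    (hs : ∀ μ ∈ spectrum ℂ (cxEnd B), μ = 1 ∨ ‖μ‖ ≠ 1)
    (h1 : Module.finrank ℂ (Module.End.maxGenEigenspace (cxEnd B) 1) = 1) :
    ∃ (l : E →L[ℝ] ℝ) (p : ℝ[X]), p.Monic ∧ l v = 1 ∧ (∀ y, l (B y) = l y) ∧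
      (∀ y, l y = 0 → aeval (B : E →ₗ[ℝ] E) p y = 0) ∧
      (∀ μ : ℂ, (p.map (algebraMap ℝ ℂ)).IsRoot μ → ‖μ‖ ≠ 1) := by
  set B' : E →ₗ[ℝ] E := (B : E →ₗ[ℝ] E) with hB'
  have hcp : (cxEnd B).charpoly = B'.charpoly.map (algebraMap ℝ ℂ) := LinearMap.charpoly_baseChange ..
  have hr : B'.charpoly.rootMultiplicity 1 = 1 := by
    rw [eq_rootMultiplicity_map (algebraMap ℝ ℂ).injective, ← hcp, map_one,
      ← LinearMap.finrank_maxGenEigenspace_eq, h1]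
  obtain ⟨p, hp, hnd⟩ := B'.charpoly.exists_eq_pow_rootMultiplicity_mul_and_not_dvd
    B'.charpoly_monic.ne_zero 1
  rw [hr, pow_one] at hp
  have hpm : p.Monic := (monic_X_sub_C 1).of_mul_monic_left (hp ▸ B'.charpoly_monic)
  have hp1 : p.eval 1 ≠ 0 := fun h => hnd (dvd_iff_isRoot.2 h)
  have hfix : ∀ y, B' (aeval B' p y) = aeval B' p y := by
    intro y
    have := B'.aeval_self_charpoly
    rw [hp, map_mul] at this
    have := LinearMap.congr_fun this y
    simpa [sub_eq_zero] using this
  have hspan : ∀ w, B' w = w → ∃ c : ℝ, c • v = w := by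
    have hfr : Module.finrank ℝ (Module.End.maxGenEigenspace B' 1) = 1 := by
      rw [LinearMap.finrank_maxGenEigenspace_eq, hr]
    have hmem : ∀ w, B' w = w → w ∈ Module.End.maxGenEigenspace B' 1 := by
      intro w hw
      rw [Module.End.mem_maxGenEigenspace]
      exact ⟨1, by simp [hw]⟩
    intro w hw
    obtain ⟨c, hc⟩ := (finrank_eq_one_iff_of_nonzero' (⟨v, hmem v hBv⟩ : Module.End.maxGenEigenspace B' 1)
      (by simpa using hv)).1 hfr ⟨w, hmem w hw⟩
    exact ⟨c, congrArg Subtype.val hc⟩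
  have hpv : aeval B' p v = p.eval 1 • v := 
    Module.End.aeval_apply_of_hasEigenvector ⟨by rw [Module.End.mem_eigenspace_iff, one_smul]; exact hBv, hv⟩
  obtain ⟨l0, hl0⟩ := SeparatingDual.exists_eq_one (R := ℝ) hv
  refine ⟨(p.eval 1)⁻¹ • l0.comp (LinearMap.toContinuousLinearMap (aeval B' p)), p, hpm, ?_, ?_, ?_, ?_⟩
  · simp [hpv, hl0, hp1]
  · intro y
    have : aeval B' p (B' y) = B' (aeval B' p y) := by
      rw [← Module.End.mul_apply, ← Module.End.mul_apply]
      congr 1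
      nth_rewrite 2 [← aeval_X (R := ℝ) B']
      nth_rewrite 3 [← aeval_X (R := ℝ) B']
      rw [← map_mul, ← map_mul, mul_comm]
    have h2 : aeval B' p (B y) = aeval B' p y := this.trans (hfix y)
    simp [h2]
  · intro y hy
    obtain ⟨c, hc⟩ := hspan _ (hfix y)
    have : l0 (aeval B' p y) = 0 := by simpa [hp1] using hy
    rw [← hc] at this ⊢
    have : c = 0 := by simpa [hl0] using this
    simp [this]
  · intro μ hμ
    have hr : (cxEnd B).charpoly.IsRoot μ := by
      rw [hcp, hp, Polynomial.map_mul]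
      exact root_mul_left_of_isRoot _ hμ
    rcases hs μ ((Module.End.mem_spectrum_iff_isRoot_charpoly _ _).2 hr) with h | h
    · exfalso
      subst h
      apply hp1
      have : (p.map (algebraMap ℝ ℂ)).eval ((algebraMap ℝ ℂ) 1) = 0 := by simpa using hμ
      rw [eval_map_apply] at this
      exact (algebraMap ℝ ℂ).injective (by simpa using this)
    · exact h

theorem sing_local {E : Type*} [NormedAddCommGroup E] [NormedSpace ℝ E] [FiniteDimensional ℝ E]
    (X : E → E) (φ : ℝ → E → E) (hX : ContDiff ℝ 1 X) (hgen : GeneratedBy X φ) (σ : E)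
    (hσ : HypSing X σ) :
    ∃ ε : ℝ, 0 < ε ∧ ∀ z, (∀ t ≤ 0, dist (φ t z) σ ≤ ε) → z ∈ WuPoint φ σ := by
  obtain ⟨h0, hs⟩ := hσ
  set A := fderiv ℝ X σ with hA
  obtain ⟨C, hC, H⟩ := cont_main A hs
  have hd : HasFDerivAt X A σ := ((hX.differentiable (by norm_num)) σ).hasFDerivAt
  have hev := hd.isLittleO.def (c := (2 * C)⁻¹) (by positivity)
  obtain ⟨r, hr, hball⟩ := Metric.eventually_nhds_iff.1 hev
  refine ⟨r / 2, by positivity, fun z hz => ?_⟩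
  set y : ℝ → E := fun t => φ (-t) z - σ with hy
  set g : ℝ → E := fun t => X (φ (-t) z) - A (y t) with hg
  have hyb : ∀ t, 0 ≤ t → ‖y t‖ ≤ r / 2 := fun t ht => by
    rw [hy, ← dist_eq_norm]; exact hz _ (by linarith)
  have hgb : ∀ t, 0 ≤ t → ‖g t‖ ≤ (2 * C)⁻¹ * ‖y t‖ := fun t ht => by
    have := hball (y := φ (-t) z) (by linarith [hz (-t) (by linarith)])
    rw [h0, sub_zero] at this
    exact this
  have hyd : ∀ t, HasDerivAt y (-(A (y t) + g t)) t := by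
    intro t
    have h1 : HasDerivAt (fun t => φ (-t) z) ((-1 : ℝ) • X (φ (-t) z)) t :=
      (hgen.2.2 z (-t)).scomp t (hasDerivAt_neg t)
    refine (h1.sub_const σ).congr_deriv ?_
    simp [hg]
  have key : ∀ k : ℕ, ∀ᶠ t in atTop, ‖y t‖ ≤ (r / 2) * (1 / 2) ^ k := by
    intro k
    induction k with
    | zero => filter_upwards [eventually_ge_atTop 0] with t ht; simpa using hyb t ht
    | succ k ih =>
      have := H y g (r/2) ((2 * C)⁻¹ * ((r / 2) * (1 / 2) ^ k)) hyd hyb (by positivity) (by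
        filter_upwards [ih, eventually_ge_atTop 0] with t h1 h2
        exact (hgb t h2).trans (by gcongr))
      filter_upwards [this] with t ht
      refine ht.trans (le_of_eq ?_)
      field_simp
      ring
  have hy0 : Tendsto y atTop (nhds 0) := by
    rw [NormedAddGroup.tendsto_nhds_zero]
    intro e he
    have : Tendsto (fun k : ℕ => (r / 2) * (1 / 2 : ℝ) ^ k) atTop (nhds ((r/2) * 0)) :=
      (tendsto_pow_atTop_nhds_zero_of_lt_one (by norm_num) (by norm_num)).const_mul _
    rw [mul_zero] at this
    obtain ⟨k, hk⟩ := (this.eventually_lt_const he).exists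
    filter_upwards [key k] with t ht
    exact ht.trans_lt hk
  have h2 : Tendsto (fun t => y (-t) + σ) atBot (nhds (0 + σ)) :=
    (hy0.comp tendsto_neg_atBot_atTop).add_const σ
  simpa [WuPoint, hy] using h2

theorem per_local {E : Type*} [NormedAddCommGroup E] [NormedSpace ℝ E] [FiniteDimensional ℝ E]
    (X : E → E) (φ : ℝ → E → E) (hX : ContDiff ℝ 1 X) (hflow : IsFlow φ)
    (hgen : GeneratedBy X φ) (q : E) (T : ℝ) (hT : 0 < T) (hqT : φ T q = q) (hXq : X q ≠ 0)
    (hs : ∀ μ ∈ spectrum ℂ (cxEnd (fderiv ℝ (φ T) q)), μ = 1 ∨ ‖μ‖ ≠ 1)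
    (h1 : Module.finrank ℂ (Module.End.maxGenEigenspace (cxEnd (fderiv ℝ (φ T) q)) 1) = 1) :
    ∃ ε : ℝ, 0 < ε ∧ ∀ z, (∀ n : ℕ, dist (φ (n * T) z) q ≤ ε) → ∃ s, φ s z ∈ Wss φ q := by
  obtain ⟨hcont, hz0, hadd⟩ := hflow
  set B := fderiv ℝ (φ T) q with hB
  set v := X q with hv
  have hdiff : HasFDerivAt (φ T) B q := by
    by_contra hnd
    have hB0 : B = 0 := fderiv_zero_of_not_differentiableAt (fun h => hnd h.hasFDerivAt)
    have hz : cxEnd B = 0 := by rw [hB0]; simp [cxEnd]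
    have hbot : Module.End.maxGenEigenspace (cxEnd B) 1 = ⊥ := by
      rw [hz, eq_bot_iff]
      intro x hx
      obtain ⟨k, hk⟩ := (Module.End.mem_maxGenEigenspace _ _ _).1 hx
      simp only [one_smul, zero_sub] at hk
      rcases neg_one_pow_eq_or (Module.End ℂ (ℂ ⊗[ℝ] E)) k with h | h <;> rw [h] at hk <;>
        simpa using hk
    rw [hbot] at h1
    simp at h1
  have hBv : B v = v := by
    have e1 : HasDerivAt (fun s => φ s q) v 0 := by
      have := hgen.2.2 q 0
      rwa [hz0] at this
    have e2 : HasDerivAt (fun s => φ T (φ s q)) (B v) 0 := by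
      have h : HasFDerivAt (φ T) B (φ 0 q) := by rw [hz0]; exact hdiff
      exact h.comp_hasDerivAt (0:ℝ) e1
    have e3 : (fun s => φ T (φ s q)) = fun s => φ s q := by
      ext s
      rw [← hadd, add_comm, hadd, hqT]
    rw [e3] at e2
    exact e2.unique e1
  obtain ⟨l, p, hpm, hlv, hlB, hlp, hroots⟩ := periodic_algebra B v hXq hBv hs h1
  obtain ⟨C, hC, H⟩ := discrete_main B p hpm hroots
  -- constants
  set L := ‖l‖ with hL
  have hL0 : 0 ≤ L := norm_nonneg _
  set δ' := (2 * (L + 1))⁻¹ with hδ'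
  have hδ'0 : 0 < δ' := by positivity
  have hLδ' : L * δ' ≤ 1 / 2 := by
    rw [hδ', ← div_eq_mul_inv, div_le_div_iff₀ (by positivity) (by norm_num)]; linarith
  set Q := 1 + (‖v‖ + δ') * (2 * L) with hQ
  have hQ1 : 0 < Q := by positivity
  set δ := (2 * (C + 1) * Q)⁻¹ with hδ
  have hδ0 : 0 < δ := by positivity
  have hCδ : C * (Q * δ) ≤ 1 / 2 := by
    have : C * (Q * δ) = C / (2 * (C + 1)) := by rw [hδ]; field_simp
    rw [this, div_le_div_iff₀ (by positivity) (by norm_num)]; linarith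
  -- neighbourhoods
  obtain ⟨r, hr, hrb⟩ := Metric.eventually_nhds_iff.1 (hdiff.isLittleO.def hδ0)
  have hc0 : ContinuousAt (fun p : ℝ × E => φ p.1 p.2) (0, q) := hcont.continuousAt
  have hc1 : ContinuousAt (fun p : ℝ × E => X (φ p.1 p.2)) (0, q) :=
    (hX.continuous.comp hcont).continuousAt
  have ev : ∀ᶠ p : ℝ × E in nhds (0, q), dist (φ p.1 p.2) q < r ∧ dist (X (φ p.1 p.2)) v < δ' := by
    have a1 := Metric.tendsto_nhds.1 hc0 r hr
    have a2 := Metric.tendsto_nhds.1 hc1 δ' hδ'0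
    simp only [hz0] at a1 a2
    exact a1.and a2
  obtain ⟨η, hη, hηb⟩ := Metric.eventually_nhds_iff.1 ev
  have box : ∀ s x, |s| ≤ η / 2 → dist x q ≤ η / 2 →
      dist (φ s x) q < r ∧ dist (X (φ s x)) v < δ' := by
    intro s x h1 h2
    refine hηb (y := (s, x)) ?_
    rw [Prod.dist_eq, max_lt_iff]
    simp only [Real.dist_eq, sub_zero]
    constructor <;> linarith
  -- mean value inequality
  have mvt : ∀ x, dist x q ≤ η / 2 → ∀ s s', |s| ≤ η / 2 → |s'| ≤ η / 2 →
      ‖φ s' x - φ s x - (s' - s) • v‖ ≤ δ' * |s' - s| := by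
    intro x hx s s' h1 h2
    have := (convex_Icc (-(η/2)) (η/2)).norm_image_sub_le_of_norm_hasDerivWithin_le
      (f := fun t => φ t x - t • v) (f' := fun t => X (φ t x) - v) (C := δ') (x := s) (y := s')
      (fun t _ => by
        have := (hgen.2.2 x t).sub ((hasDerivAt_id t).smul_const v)
        exact (this.congr_deriv (by simp)).hasDerivWithinAt)
      (fun t ht => by
        rw [← dist_eq_norm]
        exact (box t x (abs_le.2 ht) hx).2.le) (abs_le.1 h1) (abs_le.1 h2)
    rw [Real.norm_eq_abs] at this
    convert this using 2
    rw [sub_smul]; abel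
  have labs : ∀ w, |l w| ≤ L * ‖w‖ := fun w => l.le_opNorm w
  set ε := min (η / 2) (η / (4 * (L + 1))) with hε
  refine ⟨ε, by positivity, fun z hz => ?_⟩
  have hεη : ε ≤ η / 2 := min_le_left _ _
  have hLε : L * ε ≤ η / 4 := by
    have : ε ≤ η / (4 * (L + 1)) := min_le_right _ _
    calc L * ε ≤ (L + 1) * (η / (4 * (L + 1))) := by gcongr; linarith
      _ = η / 4 := by field_simp
  -- times
  have times : ∀ x, dist x q ≤ ε → ∃ s, |s| ≤ η / 2 ∧ l (φ s x - q) = 0 := by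
    intro x hx
    have hx' : dist x q ≤ η / 2 := hx.trans hεη
    have hη2 : |η / 2| ≤ η / 2 := by rw [abs_of_pos (by positivity)]
    have hη2' : |-(η / 2)| ≤ η / 2 := by rw [abs_neg]; exact hη2
    have h00 : |(0:ℝ)| ≤ η / 2 := by simp; positivity
    have m1 := mvt x hx' 0 (η / 2) h00 hη2
    have m2 := mvt x hx' 0 (-(η / 2)) h00 hη2'
    rw [hz0, sub_zero] at m1 m2
    have b0 : |l (x - q)| ≤ η / 4 := by
      refine (labs _).trans (le_trans ?_ hLε)
      rw [← dist_eq_norm]; gcongr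
    have c1 := (labs _).trans (mul_le_mul_of_nonneg_left m1 hL0)
    have c2 := (labs _).trans (mul_le_mul_of_nonneg_left m2 hL0)
    rw [abs_of_pos (by positivity : 0 < η/2)] at c1
    rw [abs_neg, abs_of_pos (by positivity : 0 < η/2)] at c2
    have d : L * (δ' * (η / 2)) ≤ η / 4 := by
      rw [← mul_assoc]; nlinarith
    simp only [map_sub, map_smul, hlv, smul_eq_mul, mul_one] at c1 c2 b0
    obtain ⟨c1, -⟩ := abs_le.1 c1
    obtain ⟨-, c2⟩ := abs_le.1 c2
    obtain ⟨b1, b2⟩ := abs_le.1 b0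
    have hcs : ContinuousOn (fun s => l (φ s x - q)) (Icc (-(η/2)) (η/2)) := by
      have : Continuous (fun s => φ s x) := hcont.comp (by fun_prop : Continuous fun s : ℝ => (s, x))
      exact (l.continuous.comp (this.sub continuous_const)).continuousOn
    have := intermediate_value_Icc (by linarith : -(η/2) ≤ η/2) hcs
    obtain ⟨s, hs, hs'⟩ := this (show (0:ℝ) ∈ _ by
      simp only [map_sub, mem_Icc]
      constructor <;> linarith)
    exact ⟨s, abs_le.2 hs, hs'⟩
  choose s hsη hs0 using fun n : ℕ => times (φ (n * T) z) (hz n)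
  set y : ℕ → E := fun n => φ (s n) (φ (n * T) z) - q with hy
  have hyr : ∀ n, dist (φ (s n) (φ (n * T) z)) q < r := fun n =>
    (box _ _ (hsη n) ((hz n).trans hεη)).1
  have hyM : ∀ n, ‖y n‖ ≤ r := fun n => by rw [hy, ← dist_eq_norm]; exact (hyr n).le
  have step : ∀ n, |s (n+1) - s n| ≤ 2 * L * δ * ‖y n‖ ∧
      ‖y (n+1) - B (y n)‖ ≤ Q * δ * ‖y n‖ := by
    intro n
    set τ := s (n+1) - s n with hτ
    have e1 : ‖φ T (φ (s n) (φ (n*T) z)) - q - B (y n)‖ ≤ δ * ‖y n‖ := by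
      have := hrb (hyr n)
      rwa [hqT] at this
    have e2 : φ T (φ (s n) (φ (n*T) z)) = φ (s n) (φ ((n+1 : ℕ) * T) z) := by
      rw [← hadd, ← hadd, ← hadd]; congr 1; push_cast; ring
    have e3 := mvt (φ ((n+1 : ℕ) * T) z) ((hz (n+1)).trans hεη) (s n) (s (n+1)) (hsη n) (hsη (n+1))
    rw [e2] at e1
    set a := φ (s n) (φ ((n+1 : ℕ) * T) z) - q - B (y n) with ha
    set b := φ (s (n+1)) (φ ((n+1 : ℕ) * T) z) - φ (s n) (φ ((n+1 : ℕ) * T) z) - τ • v with hb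
    have e4 : y (n+1) - B (y n) = a + τ • v + b := by
      simp only [hy, ha, hb]; abel
    have e5 : l a + τ + l b = 0 := by
      have : l (y (n+1) - B (y n)) = 0 := by
        rw [map_sub, hlB, hs0, hs0, sub_zero]
      rw [e4] at this
      simpa [hlv] using this
    have e6 : |τ| ≤ L * (δ * ‖y n‖) + |τ| * (1/2) := by
      have : τ = -(l a + l b) := by linarith
      calc |τ| = |l a + l b| := by rw [this, abs_neg]
        _ ≤ |l a| + |l b| := abs_add_le _ _
        _ ≤ L * (δ * ‖y n‖) + L * (δ' * |τ|) :=
          add_le_add ((labs a).trans (by gcongr)) ((labs b).trans (by gcongr))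
        _ ≤ _ := by nlinarith [abs_nonneg τ]
    have e7 : |τ| ≤ 2 * L * δ * ‖y n‖ := by linarith
    refine ⟨e7, ?_⟩
    rw [e4]
    calc ‖a + τ • v + b‖ ≤ ‖a‖ + ‖τ • v‖ + ‖b‖ := norm_add₃_le
      _ ≤ δ * ‖y n‖ + |τ| * ‖v‖ + δ' * |τ| := by
        rw [norm_smul, Real.norm_eq_abs]; gcongr
      _ = δ * ‖y n‖ + (‖v‖ + δ') * |τ| := by ring
      _ ≤ δ * ‖y n‖ + (‖v‖ + δ') * (2 * L * δ * ‖y n‖) := by gcongr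
      _ = _ := by rw [hQ]; ring
  have hsumb : ∀ N, ∑ n ∈ Finset.range N, ‖y n‖ ≤ 2 * (C * r) := by
    intro N
    have h1 := H y r N (fun n => hlp _ (hs0 n)) hyM
    have h2 : ∑ n ∈ Finset.range N, ‖y (n+1) - B (y n)‖ ≤ Q * δ * ∑ n ∈ Finset.range N, ‖y n‖ := by
      rw [Finset.mul_sum]; exact Finset.sum_le_sum fun n _ => (step n).2
    have h3 : 0 ≤ ∑ n ∈ Finset.range N, ‖y n‖ := by positivity
    have h4 := mul_le_mul_of_nonneg_left h2 hC
    nlinarith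
  have hsum : Summable fun n => ‖y n‖ := summable_of_sum_range_le (fun n => norm_nonneg _) hsumb
  have hy0 : Tendsto y atTop (nhds 0) := tendsto_zero_iff_norm_tendsto_zero.2 hsum.tendsto_atTop_zero
  have hcau : CauchySeq s := by
    refine cauchySeq_of_dist_le_of_summable (fun n => 2 * L * δ * ‖y n‖) (fun n => ?_) (hsum.mul_left _)
    rw [dist_comm, Real.dist_eq]; exact (step n).1
  obtain ⟨S, hS⟩ := cauchySeq_tendsto_of_complete hcau
  refine ⟨S, ?_⟩
  have hlim : Tendsto (fun n : ℕ => φ (n * T) (φ S z)) atTop (nhds q) := by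
    have e : ∀ n : ℕ, φ (n * T) (φ S z) = φ (S - s n) (y n + q) := by
      intro n
      simp only [hy, sub_add_cancel]
      rw [← hadd, ← hadd, ← hadd]; congr 1; ring
    have h1 : Tendsto (fun n => (S - s n, y n + q)) atTop (nhds (S - S, 0 + q)) :=
      (tendsto_const_nhds.sub hS).prodMk_nhds (hy0.add_const q)
    have h2 := (hcont.tendsto (S - S, 0 + q)).comp h1
    simp only [sub_self, zero_add, hz0] at h2
    refine h2.congr fun n => ?_
    simp [e]
  -- from discrete times to continuous times
  have hper : ∀ n : ℕ, φ (n * T) q = q := by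
    intro n
    induction n with
    | zero => simp [hz0]
    | succ n ih =>
      have : ((n+1 : ℕ) : ℝ) * T = n * T + T := by push_cast; ring
      rw [this, hadd, hqT, ih]
  have hunif : ∀ e > 0, ∀ᶠ x in nhds q, ∀ u ∈ Icc 0 T, dist (φ u x) (φ u q) < e := by
    intro e he
    have := isCompact_Icc (a := (0:ℝ)) (b := T) |>.eventually_forall_of_forall_eventually (x₀ := q)
      (P := fun x u => dist (φ u x) (φ u q) < e) (fun u _ => by
        have c : Continuous fun z : E × ℝ => dist (φ z.2 z.1) (φ z.2 q) :=
          (hcont.comp (by fun_prop : Continuous fun z : E × ℝ => (z.2, z.1))).dist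
            (hcont.comp (by fun_prop : Continuous fun z : E × ℝ => (z.2, q)))
        have := c.tendsto (q, u)
        simp only [dist_self] at this
        exact this.eventually_lt_const he)
    exact this
  rw [Wss, mem_ofPred_eq, Metric.tendsto_nhds]
  intro e he
  have h2 := hlim.eventually (hunif e he)
  have h3 : Tendsto (fun t : ℝ => ⌊t / T⌋₊) atTop atTop :=
    tendsto_nat_floor_atTop.comp (tendsto_id.atTop_div_const hT)
  filter_upwards [h3.eventually h2, eventually_ge_atTop 0] with t ht ht0
  have hf1 := Nat.floor_le (div_nonneg ht0 hT.le)
  have hf2 := Nat.lt_floor_add_one (t / T)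
  rw [le_div_iff₀ hT] at hf1
  rw [div_lt_iff₀ hT] at hf2
  have h5 := ht (t - ⌊t / T⌋₊ * T) ⟨by linarith, by linarith⟩
  rw [Real.dist_0_eq_abs, abs_of_nonneg dist_nonneg]
  rw [← hadd, sub_add_cancel] at h5
  have h6 : φ t q = φ (t - ⌊t / T⌋₊ * T) q := by
    conv_lhs => rw [← sub_add_cancel t (⌊t / T⌋₊ * T), hadd, hper]
  rw [h6]; exact h5

/-- If a compact invariant set `Λ` has the weak specification property and
contains a hyperbolic singularity `σ` and a hyperbolic periodic orbit `O(q)`, then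
`W^u(σ) ∩ W^s(O(q)) ≠ ∅`. -/
theorem unstable_of_singularity_meets_stable_of_periodic
    {E : Type*} [NormedAddCommGroup E] [NormedSpace ℝ E] [FiniteDimensional ℝ E]
    (X : E → E) (φ : ℝ → E → E) (hX : ContDiff ℝ 1 X)
    (hflow : IsFlow φ) (hgen : GeneratedBy X φ)
    (Λ : Set E) (hΛc : IsCompact Λ) (hΛi : InvariantSet φ Λ) (hspec : WeakSpec φ Λ)
    (σ q : E) (hσΛ : σ ∈ Λ) (hqΛ : q ∈ Λ)
    (hσ : HypSing X σ) (hq : HypPeriodic X φ q) :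
    (WuPoint φ σ ∩ WsOrb φ q).Nonempty := by
  obtain ⟨hXq, T, hT, hqT, hsp, hfr⟩ := hq
  obtain ⟨ε₁, hε₁, H₁⟩ := sing_local X φ hX hgen σ hσ
  obtain ⟨ε₂, hε₂, H₂⟩ := per_local X φ hX hflow hgen q T hT hqT hXq hsp hfr
  obtain ⟨hcont, hz0, hadd⟩ := hflow
  -- the singularity is fixed by the flow
  have hfix : ∀ t, φ t σ = σ := by
    obtain ⟨Kl, hKl⟩ := LocallyLipschitzOn.exists_lipschitzOnWith_of_compact hΛc
      (hX.locallyLipschitz.locallyLipschitzOn)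
    have := ODE_solution_unique_univ (v := fun _ => X) (s := fun _ => Λ) (K := Kl) (t₀ := 0)
      (f := fun t => φ t σ) (g := fun _ => σ) (fun _ => hKl)
      (fun t => ⟨hgen.2.2 σ t, hΛi t σ hσΛ⟩)
      (fun t => ⟨by rw [hσ.1]; exact hasDerivAt_const t σ, hσΛ⟩) (hz0 σ)
    exact fun t => congrFun this t
  have hper : ∀ n : ℕ, φ (n * T) q = q := by
    intro n
    induction n with
    | zero => simp [hz0]
    | succ n ih =>
      have : ((n+1 : ℕ) : ℝ) * T = n * T + T := by push_cast; ring
      rw [this, hadd, hqT, ih]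
  obtain ⟨K, hK, hKs⟩ := hspec (min ε₁ ε₂) (lt_min hε₁ hε₂)
  have hsh : ∀ n : ℕ, ∃ z ∈ Λ, (∀ t ∈ Icc (-(n:ℝ)) 0, dist (φ t z) σ < min ε₁ ε₂) ∧
      (∀ t ∈ Icc K (K + n), dist (φ t z) (φ (t - K) q) < min ε₁ ε₂) := by
    intro n
    have hn : (0:ℝ) ≤ n := Nat.cast_nonneg n
    obtain ⟨z, hz, h1, h2⟩ := hKs (-(n:ℝ)) 0 K (K + n) (by linarith) (by linarith) (by linarith)
      σ hσΛ q hqΛ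
    exact ⟨z, hz, fun t ht => by simpa [hfix] using h1 t ht, h2⟩
  choose zs hzΛ hz1 hz2 using hsh
  obtain ⟨z, -, ψ, hψ, hlim⟩ := hΛc.tendsto_subseq hzΛ
  have hψt : Tendsto (fun n => (ψ n : ℝ)) atTop atTop :=
    tendsto_natCast_atTop_atTop.comp hψ.tendsto_atTop
  have hφt : ∀ t, Tendsto (fun n => φ t (zs (ψ n))) atTop (nhds (φ t z)) := by
    intro t
    have : Continuous (φ t) := hcont.comp (by fun_prop : Continuous fun x : E => (t, x))
    exact (this.tendsto z).comp hlim
  have hu : z ∈ WuPoint φ σ := by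
    refine H₁ z fun t ht => ?_
    refine le_of_tendsto ((hφt t).dist tendsto_const_nhds) ?_
    filter_upwards [hψt.eventually_ge_atTop (-t)] with n hn
    exact (hz1 (ψ n) t ⟨by linarith, ht⟩).le.trans (min_le_left _ _)
  obtain ⟨s, hs⟩ := H₂ (φ K z) fun m => by
    rw [← hadd]
    refine le_of_tendsto ((hφt _).dist tendsto_const_nhds) ?_
    filter_upwards [hψt.eventually_ge_atTop (m * T)] with n hn
    have hm : (0:ℝ) ≤ m * T := by positivity
    have := hz2 (ψ n) (m * T + K) ⟨by linarith, by linarith⟩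
    rw [add_sub_cancel_right, hper] at this
    exact this.le.trans (min_le_right _ _)
  refine ⟨φ s (φ K z), ?_, mem_iUnion.2 ⟨0, by rw [hz0]; exact hs⟩⟩
  have h1 : Tendsto (fun t : ℝ => t + (s + K)) atBot atBot :=
    tendsto_atBot_add_const_right _ _ tendsto_id
  have h2 : Tendsto (fun t : ℝ => φ t z) atBot (nhds σ) := hu
  refine (h2.comp h1).congr fun t => ?_
  simp only [Function.comp_apply]
  rw [hadd, hadd]
end
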